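/- Let g be an integer with |g| > 1 which is not a perfect power (i.e. the maximal h ∈ ℕ with g = g₀^h for some integer g₀ is h = 1) and which is not a perfect square. Let g₁ be the squarefree kernel of g (the unique squarefree integer of the same sign as g such that g/g₁ is a perfect square), and set d = g₁ if g₁ ≡ 1 (mod 4) and d = 4g₁ otherwise (so d is the discriminant of ℚ(√g)). Fix an integer k ≥ 0. Then, with the summation ∑' running over those primes p among the first N primes for which the Legendre symbol (g/p) = −1, the limit as N → ∞ of (∑' p^k φ(p − 1)) / (∑' p^k (p − 1)) exists and equals A(g) = [∏_p (1 − 1/(p(p−1)))] · [1 − μ(|d|) · ∏_{q prime, q | d} 1/(q² − q − 1)], where the first product runs over all primes p and μ is the Möbius function. -/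

import Mathlib

open Filter

/-- Artin's constant `A = ∏_p (1 - 1/(p(p-1)))`, product over all primes. -/
noncomputable def artinConstant : ℝ :=
  ∏' p : Nat.Primes, (1 - 1 / (((p : ℕ) : ℝ) * (((p : ℕ) : ℝ) - 1)))

open MeasureTheory Topology

/-!
Expanding `φ(p - 1) / (p - 1) = ∑_{n ∣ p - 1} μ(n) / n` reduces the numerator to the mean values,
over primes `p ≡ 1 mod n`, of `(1 - (g/p)) / 2`. The prime number theorem in arithmetic
progressions, which follows from the Wiener–Ikehara theorem, gives the value `1 / φ(n)` for the
constant `1`; for `(g/p)` it gives `1 / φ(n)` if `d ∣ n`, since then `(g/p) = 1` for all large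
`p ≡ 1 mod n`, and `0` otherwise, since then some `u ≡ 1 mod n` has `(g/u) = -1`. A Chebyshev bound
uniform in `n` allows taking the limit under the sum over `n`, so the numerator has mean
`½ ∑ₙ μ(n) / (n φ(n)) - ½ ∑_{d ∣ n} μ(n) / (n φ(n))`, two Euler products whose difference is
`A(g) / 2`. The denominator has mean `1 / 2`. All these means weigh a prime `p` by `log p`; since
`j ^ k (j - 1) / log j` is monotone in `j`, Abel summation replaces `log p` by `p ^ k (p - 1)`.
-/

/-! ### The Fejér kernel -/

/-- The Fejér kernel `(sin (u/2) / (u/2))²`, the Fourier transform of the tent function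
`t ↦ 1 - |t|` on `[-1, 1]`. -/
noncomputable def fejerKernel (u : ℝ) : ℝ := Real.sinc (u / 2) ^ 2

lemma fejerKernel_nonneg (u : ℝ) : 0 ≤ fejerKernel u := sq_nonneg _

@[fun_prop]
lemma continuous_fejerKernel : Continuous fejerKernel :=
  (Real.continuous_sinc.comp (continuous_id.div_const 2)).pow 2

lemma fejerKernel_zero : fejerKernel 0 = 1 := by simp [fejerKernel]

lemma fejerKernel_of_ne_zero {u : ℝ} (hu : u ≠ 0) :
    fejerKernel u = 2 * (1 - Real.cos u) / u ^ 2 := by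
  have hcos : Real.cos u = 1 - 2 * Real.sin (u / 2) ^ 2 := by
    rw [← Real.cos_two_mul_eq_one_sub, mul_div_cancel₀ _ two_ne_zero]
  rw [fejerKernel, Real.sinc_of_ne_zero (by positivity), hcos]
  field_simp
  ring

lemma fejerKernel_le (u : ℝ) : fejerKernel u ≤ 5 * (1 + u ^ 2)⁻¹ := by
  rcases eq_or_ne u 0 with rfl | hu
  · norm_num [fejerKernel_zero]
  · rw [fejerKernel_of_ne_zero hu, ← div_eq_mul_inv,
      div_le_div_iff₀ (by positivity) (by positivity)]
    nlinarith [Real.one_sub_sq_div_two_le_cos (x := u), Real.neg_one_le_cos u]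

lemma integrable_fejerKernel : Integrable fejerKernel := by
  refine (integrable_inv_one_add_sq.const_mul 5).mono'
    continuous_fejerKernel.aestronglyMeasurable (.of_forall fun u => ?_)
  rw [Real.norm_of_nonneg (fejerKernel_nonneg u)]
  exact fejerKernel_le u

lemma integral_fejerKernel_pos : 0 < ∫ u, fejerKernel u :=
  integral_pos_of_integrable_nonneg_nonzero continuous_fejerKernel integrable_fejerKernel
    fejerKernel_nonneg (x := 0) (by simp [fejerKernel_zero])

lemma integral_two_mul_one_sub_mul_cos (u : ℝ) :
    ∫ t in (0 : ℝ)..1, 2 * (1 - t) * Real.cos (t * u) = fejerKernel u := by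
  rcases eq_or_ne u 0 with rfl | hu
  · rw [intervalIntegral.integral_eq_sub_of_hasDerivAt (f := fun t => 2 * t - t ^ 2)
      (fun t _ => ?_) ((by fun_prop : Continuous _).intervalIntegrable _ _)]
    · norm_num [fejerKernel_zero]
    · exact (((hasDerivAt_id t).const_mul 2).sub ((hasDerivAt_id t).pow 2)).congr_deriv
        (by simp; ring)
  · rw [intervalIntegral.integral_eq_sub_of_hasDerivAt
      (f := fun t => 2 * (1 - t) * (Real.sin (t * u) / u) - 2 * (Real.cos (t * u) / u ^ 2))
      (fun t _ => ?_) ((by fun_prop : Continuous _).intervalIntegrable _ _)]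
    · rw [fejerKernel_of_ne_zero hu]
      simp only [sub_self, mul_zero, zero_mul, one_mul, Real.sin_zero, Real.cos_zero, zero_div]
      ring
    · have hlin : HasDerivAt (fun t => t * u) u t := hasDerivAt_mul_const u
      refine (((((hasDerivAt_id t).const_sub 1).const_mul 2).mul (hlin.sin.div_const u)).sub
        ((hlin.cos.div_const (u ^ 2)).const_mul 2)).congr_deriv ?_
      simp only [id]
      field_simp
      ring

lemma integral_tent_mul_cexp (u : ℝ) :
    ∫ t in (-1 : ℝ)..1, ((1 - |t| : ℝ) : ℂ) * Complex.exp (Complex.I * t * u) = fejerKernel u := by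
  have hcont : Continuous fun t : ℝ => ((1 - |t| : ℝ) : ℂ) * Complex.exp (Complex.I * t * u) := by
    fun_prop
  have hreflect := intervalIntegral.integral_comp_neg (a := 0) (b := 1)
    fun t : ℝ => ((1 - |t| : ℝ) : ℂ) * Complex.exp (Complex.I * t * u)
  rw [neg_zero] at hreflect
  rw [← intervalIntegral.integral_add_adjacent_intervals (b := 0)
    (hcont.intervalIntegrable _ _) (hcont.intervalIntegrable _ _), ← hreflect,
    ← intervalIntegral.integral_add ((by fun_prop : Continuous _).intervalIntegrable _ _)
    (hcont.intervalIntegrable _ _), ← integral_two_mul_one_sub_mul_cos,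
    ← intervalIntegral.integral_ofReal]
  refine intervalIntegral.integral_congr fun t ht => ?_
  rw [Set.uIcc_of_le zero_le_one] at ht
  simp only [abs_neg, abs_of_nonneg ht.1]
  push_cast
  rw [Complex.cos]
  ring_nf

/-! ### The Wiener–Ikehara theorem -/

section LaplaceTransform

variable {b : ℝ → ℝ} {C : ℝ} {T : ℝ}

lemma integrable_fejerKernel_comp (hT : T ≠ 0) (y : ℝ) :
    Integrable fun v => fejerKernel (T * (y - v)) :=
  (integrable_fejerKernel.comp_mul_left' hT).comp_sub_left y

lemma norm_tent_mul_cexp_le {t : ℝ} (ht : t ∈ Set.Ioc (-1 : ℝ) 1) (u : ℝ) :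
    ‖((1 - |t| : ℝ) : ℂ) * Complex.exp (Complex.I * t * u)‖ ≤ 1 := by
  have hexp : Complex.I * t * u = ((t * u : ℝ) : ℂ) * Complex.I := by push_cast; ring
  have ht' : |t| ≤ 1 := abs_le.mpr ⟨ht.1.le, ht.2⟩
  rw [norm_mul, hexp, Complex.norm_exp_ofReal_mul_I, mul_one, Complex.norm_real,
    Real.norm_of_nonneg (by linarith)]
  linarith [abs_nonneg t]

lemma integrable_tent_mul_laplace (hb : Measurable b) (hC : ∀ v, |b v| ≤ C) {ε : ℝ} (hε : 0 < ε)
    (T y : ℝ) :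
    Integrable (Function.uncurry fun t v : ℝ => (b v * Real.exp (-ε * v) : ℂ) *
        (((1 - |t| : ℝ) : ℂ) * Complex.exp (Complex.I * t * (T * (y - v) : ℝ))))
      ((volume.restrict (Set.Ioc (-1 : ℝ) 1)).prod (volume.restrict (Set.Ioi (0 : ℝ)))) := by
  have hexp : Integrable (fun v : ℝ => C * Real.exp (-ε * v)) (volume.restrict (Set.Ioi 0)) :=
    (integrableOn_exp_mul_Ioi (neg_lt_zero.mpr hε) 0).const_mul C
  have hone : Integrable (fun _ : ℝ => (1 : ℝ)) (volume.restrict (Set.Ioc (-1 : ℝ) 1)) :=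
    integrable_const _
  refine (hone.mul_prod hexp).mono' ?_ ?_
  · have : Measurable fun p : ℝ × ℝ => b p.2 := hb.comp measurable_snd
    unfold Function.uncurry
    exact Measurable.aestronglyMeasurable (by fun_prop)
  · rw [Measure.prod_restrict]
    filter_upwards [ae_restrict_mem (measurableSet_Ioc.prod measurableSet_Ioi)] with p hp
    rw [Function.uncurry, norm_mul, ← Complex.ofReal_mul, Complex.norm_real, norm_mul,
      Real.norm_of_nonneg (Real.exp_pos _).le, mul_comm]
    have : 0 ≤ C := (abs_nonneg _).trans (hC 0)
    gcongr
    · exact norm_tent_mul_cexp_le hp.1 _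
    · exact hC _

lemma integral_tent_mul_laplace (hb : Measurable b) (hC : ∀ v, |b v| ≤ C) {ε : ℝ} (hε : 0 < ε)
    (T y : ℝ) :
    ∫ t in (-1 : ℝ)..1, ((1 - |t| : ℝ) : ℂ) * Complex.exp (Complex.I * t * (T * y : ℝ)) *
        ∫ v in Set.Ioi (0 : ℝ), (b v : ℂ) * Complex.exp (-(ε + Complex.I * (T * t)) * v) =
      ((∫ v in Set.Ioi (0 : ℝ), b v * Real.exp (-ε * v) * fejerKernel (T * (y - v)) : ℝ) : ℂ) := by
  have hinner (t : ℝ) : ((1 - |t| : ℝ) : ℂ) * Complex.exp (Complex.I * t * (T * y : ℝ)) *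
        ∫ v in Set.Ioi (0 : ℝ), (b v : ℂ) * Complex.exp (-(ε + Complex.I * (T * t)) * v) =
      ∫ v in Set.Ioi (0 : ℝ), (b v * Real.exp (-ε * v) : ℂ) *
        (((1 - |t| : ℝ) : ℂ) * Complex.exp (Complex.I * t * (T * (y - v) : ℝ))) := by
    rw [← integral_const_mul]
    refine integral_congr_ae (.of_forall fun v => ?_)
    have hexp : Complex.exp (Complex.I * t * (T * y : ℝ)) *
        Complex.exp (-(ε + Complex.I * (T * t)) * v) =
        Real.exp (-ε * v) * Complex.exp (Complex.I * t * (T * (y - v) : ℝ)) := by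
      push_cast
      rw [← Complex.exp_add, ← Complex.exp_add]
      ring_nf
    linear_combination ((1 - |t| : ℝ) : ℂ) * (b v : ℂ) * hexp
  simp_rw [hinner]
  rw [intervalIntegral.integral_of_le (by norm_num),
    integral_integral_swap (integrable_tent_mul_laplace hb hC hε T y), ← integral_complex_ofReal]
  refine integral_congr_ae (.of_forall fun v => ?_)
  simp only [integral_const_mul]
  rw [← intervalIntegral.integral_of_le (by norm_num), integral_tent_mul_cexp]
  push_cast
  ring

variable {g : ℂ → ℂ}

lemma integral_tent_mul_laplace_boundary (hb : Measurable b) (hC : ∀ v, |b v| ≤ C)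
    (hg : ContinuousOn g {s | 0 ≤ s.re})
    (hL : ∀ s : ℂ, 0 < s.re → ∫ v in Set.Ioi (0 : ℝ), (b v : ℂ) * Complex.exp (-s * v) = g s)
    (hT : T ≠ 0) (y : ℝ) :
    ∫ t in (-1 : ℝ)..1, ((1 - |t| : ℝ) : ℂ) * Complex.exp (Complex.I * t * (T * y : ℝ)) *
        g (Complex.I * (T * t)) =
      ((∫ v in Set.Ioi (0 : ℝ), b v * fejerKernel (T * (y - v)) : ℝ) : ℂ) := by
  -- Truncating `ε` to `max ε 0` makes both sides of the identity for `ε > 0` continuous on `ℝ`.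
  have hgcont : Continuous fun p : ℝ × ℝ =>
      g ((max p.1 0 : ℝ) + Complex.I * (T * p.2)) :=
    hg.comp_continuous (by fun_prop) fun p => by simp
  have hleft : Continuous fun ε : ℝ => ∫ t in (-1 : ℝ)..1,
      ((1 - |t| : ℝ) : ℂ) * Complex.exp (Complex.I * t * (T * y : ℝ)) *
        g ((max ε 0 : ℝ) + Complex.I * (T * t)) :=
    intervalIntegral.continuous_parametric_intervalIntegral_of_continuous' (by
      exact (by fun_prop : Continuous fun p : ℝ × ℝ => ((1 - |p.2| : ℝ) : ℂ) *
        Complex.exp (Complex.I * p.2 * (T * y : ℝ))).mul hgcont) _ _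
  have hright : Continuous fun ε : ℝ => ∫ v in Set.Ioi (0 : ℝ),
      b v * Real.exp (-max ε 0 * v) * fejerKernel (T * (y - v)) := by
    refine continuous_of_dominated (bound := fun v => C * fejerKernel (T * (y - v)))
      (fun ε => (by fun_prop : Measurable _).aestronglyMeasurable) (fun ε => ?_)
      ((integrable_fejerKernel_comp hT y).const_mul C).integrableOn
      (.of_forall fun v => by fun_prop)
    filter_upwards [ae_restrict_mem measurableSet_Ioi] with v hv
    have hexp : Real.exp (-max ε 0 * v) ≤ 1 :=
      Real.exp_le_one_iff.mpr (mul_nonpos_of_nonpos_of_nonneg (by simp) hv.le)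
    rw [norm_mul, norm_mul, Real.norm_of_nonneg (fejerKernel_nonneg _),
      Real.norm_of_nonneg (Real.exp_pos _).le, ← mul_one C]
    have : 0 ≤ C := (abs_nonneg _).trans (hC 0)
    exact mul_le_mul_of_nonneg_right (by gcongr; exact hC v) (fejerKernel_nonneg _)
  have hlim := tendsto_nhds_unique_of_eventuallyEq (l := 𝓝[>] (0 : ℝ))
    (hleft.tendsto 0 |>.mono_left nhdsWithin_le_nhds)
    ((Complex.continuous_ofReal.comp hright).tendsto 0 |>.mono_left nhdsWithin_le_nhds) (by
      filter_upwards [self_mem_nhdsWithin] with ε (hε : 0 < ε)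
      rw [Function.comp_apply, max_eq_left hε.le, ← integral_tent_mul_laplace hb hC hε T y]
      refine intervalIntegral.integral_congr fun t _ => ?_
      simp only [hL (ε + Complex.I * (T * t)) (by simp [hε])])
  simpa using hlim

lemma tendsto_integral_tent_mul_cexp {f : ℝ → ℂ} (hT : 0 < T) :
    Tendsto (fun y : ℝ => ∫ t in (-1 : ℝ)..1,
      ((1 - |t| : ℝ) : ℂ) * Complex.exp (Complex.I * t * (T * y : ℝ)) * f t) atTop (𝓝 0) := by
  have hfreq : Tendsto (fun y : ℝ => -(T * y / (2 * Real.pi))) atTop (cocompact ℝ) :=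
    (tendsto_neg_atTop_atBot.comp ((tendsto_id.const_mul_atTop hT).atTop_div_const
      (by positivity))).mono_right atBot_le_cocompact
  refine ((Real.tendsto_integral_exp_smul_cocompact
    ((Set.Ioc (-1 : ℝ) 1).indicator fun t : ℝ => ((1 - |t| : ℝ) : ℂ) * f t)).comp
      hfreq).congr fun y => ?_
  rw [intervalIntegral.integral_of_le (by norm_num), ← integral_indicator measurableSet_Ioc]
  refine integral_congr_ae (.of_forall fun t => ?_)
  by_cases ht : t ∈ Set.Ioc (-1 : ℝ) 1
  · have hphase : ((2 * Real.pi * -(t * -(T * y / (2 * Real.pi))) : ℝ) : ℂ) * Complex.I =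
        Complex.I * t * (T * y : ℝ) := by
      rw [show 2 * Real.pi * -(t * -(T * y / (2 * Real.pi))) = t * (T * y) by field_simp]
      push_cast
      ring
    simp only [Set.indicator_of_mem ht, Circle.smul_def, Real.fourierChar_apply, smul_eq_mul,
      hphase]
    ring
  · simp only [Set.indicator_of_notMem ht, smul_zero]

lemma tendsto_integral_mul_fejerKernel_of_laplace (hb : Measurable b) (hC : ∀ v, |b v| ≤ C)
    (hg : ContinuousOn g {s | 0 ≤ s.re})
    (hL : ∀ s : ℂ, 0 < s.re → ∫ v in Set.Ioi (0 : ℝ), (b v : ℂ) * Complex.exp (-s * v) = g s)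
    (hT : 0 < T) :
    Tendsto (fun y : ℝ => ∫ v in Set.Ioi (0 : ℝ), b v * fejerKernel (T * (y - v))) atTop (𝓝 0) := by
  have hlim := (tendsto_integral_tent_mul_cexp (f := fun t => g (Complex.I * (T * t))) hT).congr
    (integral_tent_mul_laplace_boundary hb hC hg hL hT.ne')
  simpa [Function.comp_def] using (Complex.continuous_re.tendsto _).comp hlim

end LaplaceTransform

section Averages

variable {K : ℝ → ℝ} {B : ℝ → ℝ} {C : ℝ}

lemma integral_mul_comp_mul_sub (f : ℝ → ℝ) {T : ℝ} (hT : 0 < T) (y : ℝ) :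
    ∫ v, f v * K (T * (y - v)) = T⁻¹ * ∫ u, f (y - u / T) * K u := by
  have hshift := integral_sub_left_eq_self (fun w => f (y - w) * K (T * w)) volume y
  have hscale := Measure.integral_comp_mul_left (fun u => f (y - u / T) * K u) T
  simp only [sub_sub_cancel] at hshift
  simp only [mul_div_cancel_left₀ _ hT.ne', abs_of_pos (inv_pos.mpr hT), smul_eq_mul] at hscale
  rw [hshift, hscale]

lemma mul_integral_Ioi_comp_mul_sub {T : ℝ} (hT : 0 < T) (y : ℝ) :
    T * ∫ v in Set.Ioi 0, K (T * (y - v)) = ∫ u in Set.Iio (T * y), K u := by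
  have hmem (u : ℝ) : y - u / T ∈ Set.Ioi 0 ↔ u ∈ Set.Iio (T * y) := by
    rw [Set.mem_Ioi, Set.mem_Iio, sub_pos, div_lt_iff₀ hT, mul_comm]
  have hchange := integral_mul_comp_mul_sub (K := K) ((Set.Ioi 0).indicator 1) hT y
  simp only [Set.indicator, hmem, Pi.one_apply, ite_mul, one_mul, zero_mul] at hchange
  rw [← integral_indicator measurableSet_Ioi, ← integral_indicator measurableSet_Iio]
  simp only [Set.indicator]
  rw [hchange, mul_inv_cancel_left₀ hT.ne']
  congr

lemma tendsto_mul_integral_Ioi_comp_mul_sub (hK : Integrable K) {T : ℝ} (hT : 0 < T) :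
    Tendsto (fun y => T * ∫ v in Set.Ioi 0, K (T * (y - v))) atTop (𝓝 (∫ u, K u)) := by
  simp_rw [mul_integral_Ioi_comp_mul_sub hT]
  exact (aecover_Iio (tendsto_id.const_mul_atTop hT)).integral_tendsto_of_countably_generated hK

lemma integrable_comp_mul (hK : Integrable K) (hB : Measurable B) (hBC : ∀ v, |B v| ≤ C)
    {φ : ℝ → ℝ} (hφ : Measurable φ) : Integrable fun u => B (φ u) * K u :=
  hK.bdd_mul (hB.comp hφ).aestronglyMeasurable (.of_forall fun u => hBC (φ u))

lemma tendsto_average_of_tendsto_sub (hK : Integrable K) (hB : Measurable B)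
    (hBC : ∀ v, |B v| ≤ C) (hneg : ∀ v < 0, B v = 0) {A T : ℝ} (hT : 0 < T)
    (hlim : Tendsto (fun y => ∫ v in Set.Ioi 0, (B v - A) * K (T * (y - v))) atTop (𝓝 0)) :
    Tendsto (fun y => ∫ u, B (y - u / T) * K u) atTop (𝓝 (A * ∫ u, K u)) := by
  have hsum := (hlim.const_mul T).add ((tendsto_mul_integral_Ioi_comp_mul_sub hK hT).const_mul A)
  rw [mul_zero, zero_add] at hsum
  refine hsum.congr fun y => ?_
  have hKy : Integrable fun v => K (T * (y - v)) :=
    (hK.comp_mul_left' hT.ne').comp_sub_left y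
  have hBKy : Integrable fun v => B v * K (T * (y - v)) :=
    integrable_comp_mul hKy hB hBC measurable_id
  have hIoi : ∫ v in Set.Ioi 0, B v * K (T * (y - v)) = ∫ v, B v * K (T * (y - v)) := by
    rw [← integral_Ici_eq_integral_Ioi]
    refine setIntegral_eq_integral_of_forall_compl_eq_zero fun v hv => ?_
    rw [hneg v (not_le.mp hv), zero_mul]
  simp_rw [sub_mul]
  rw [integral_sub hBKy.integrableOn (hKy.const_mul A).integrableOn, hIoi, integral_const_mul,
    integral_mul_comp_mul_sub B hT y]
  field_simp
  ring

/-- A function `B` on `ℝ` decreases slowly when `v ↦ B v * exp v` is monotone: to the right of a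
point it cannot lose more than the exponential factor. -/
def SlowlyDecreasing (B : ℝ → ℝ) : Prop := Monotone fun v => B v * Real.exp v

lemma SlowlyDecreasing.mul_exp_neg_le (hB : SlowlyDecreasing B) (hB0 : ∀ v, 0 ≤ B v)
    {v w δ : ℝ} (hvw : v ≤ w) (hδ : w ≤ v + δ) : B v * Real.exp (-δ) ≤ B w := by
  have hmono : B v * Real.exp v ≤ B w * Real.exp w := hB hvw
  have hexp : Real.exp (-δ) * Real.exp w ≤ Real.exp v := by
    rw [← Real.exp_add]
    exact Real.exp_le_exp.mpr (by linarith)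
  refine le_of_mul_le_mul_right ?_ (Real.exp_pos w)
  rw [mul_assoc]
  exact (mul_le_mul_of_nonneg_left hexp (hB0 v)).trans hmono

lemma tendsto_exp_mul_nhdsGT_zero (a : ℝ) :
    Tendsto (fun δ => Real.exp (a * δ)) (𝓝[>] 0) (𝓝 1) :=
  ((by fun_prop : Continuous fun δ => Real.exp (a * δ)).tendsto' 0 1 (by simp)).mono_left
    nhdsWithin_le_nhds

lemma tendsto_integral_Ioc_inv (hK : Integrable K) :
    Tendsto (fun δ => ∫ u in Set.Ioc (-δ⁻¹) δ⁻¹, K u) (𝓝[>] 0) (𝓝 (∫ u, K u)) := by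
  refine (intervalIntegral_tendsto_integral hK
    (tendsto_neg_atTop_atBot.comp tendsto_inv_nhdsGT_zero) tendsto_inv_nhdsGT_zero).congr' ?_
  filter_upwards [self_mem_nhdsWithin] with δ (hδ : 0 < δ)
  have : 0 < δ⁻¹ := inv_pos.mpr hδ
  exact intervalIntegral.integral_of_le (by simp only [Function.comp_apply]; linarith)

section Pointwise

variable (hK0 : ∀ u, 0 ≤ K u) (hK : Integrable K) (hBm : Measurable B) (hB0 : ∀ v, 0 ≤ B v)
  (hBC : ∀ v, |B v| ≤ C) (hB : SlowlyDecreasing B) {T δ : ℝ}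
include hK0 hK hBm hB0 hBC hB

lemma SlowlyDecreasing.mul_integral_le_average (hT : 0 < T) (y : ℝ) :
    B y * Real.exp (-(2 * δ)) * ∫ u in Set.Ioc (-(T * δ)) (T * δ), K u ≤
      ∫ u, B (y + δ - u / T) * K u := by
  have hint : Integrable fun u => B (y + δ - u / T) * K u :=
    integrable_comp_mul hK hBm hBC (by fun_prop)
  rw [← integral_const_mul]
  calc ∫ u in Set.Ioc (-(T * δ)) (T * δ), B y * Real.exp (-(2 * δ)) * K u
      ≤ ∫ u in Set.Ioc (-(T * δ)) (T * δ), B (y + δ - u / T) * K u := by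
        refine setIntegral_mono_on (hK.const_mul _).integrableOn hint.integrableOn
          measurableSet_Ioc fun u hu => mul_le_mul_of_nonneg_right ?_ (hK0 u)
        have hle : u / T ≤ δ := (div_le_iff₀' hT).mpr hu.2
        have hge : -δ ≤ u / T := (le_div_iff₀' hT).mpr (by linarith [hu.1])
        exact hB.mul_exp_neg_le hB0 (by linarith) (by linarith)
    _ ≤ ∫ u, B (y + δ - u / T) * K u :=
        setIntegral_le_integral hint (.of_forall fun u => mul_nonneg (hB0 _) (hK0 u))

lemma SlowlyDecreasing.average_le (hT : 0 < T) (y : ℝ) :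
    ∫ u, B (y - δ - u / T) * K u ≤
      B y * Real.exp (2 * δ) * (∫ u, K u) + C * ∫ u in (Set.Ioc (-(T * δ)) (T * δ))ᶜ, K u := by
  have hint : Integrable fun u => B (y - δ - u / T) * K u :=
    integrable_comp_mul hK hBm hBC (by fun_prop)
  have hBy : 0 ≤ B y * Real.exp (2 * δ) := mul_nonneg (hB0 y) (Real.exp_pos _).le
  rw [← integral_add_compl (s := Set.Ioc (-(T * δ)) (T * δ)) measurableSet_Ioc hint]
  gcongr ?_ + ?_
  · calc ∫ u in Set.Ioc (-(T * δ)) (T * δ), B (y - δ - u / T) * K u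
        ≤ ∫ u in Set.Ioc (-(T * δ)) (T * δ), B y * Real.exp (2 * δ) * K u := by
          refine setIntegral_mono_on hint.integrableOn (hK.const_mul _).integrableOn
            measurableSet_Ioc fun u hu => mul_le_mul_of_nonneg_right ?_ (hK0 u)
          have hle : u / T ≤ δ := (div_le_iff₀' hT).mpr hu.2
          have hge : -δ ≤ u / T := (le_div_iff₀' hT).mpr (by linarith [hu.1])
          have hslow := hB.mul_exp_neg_le hB0 (v := y - δ - u / T) (w := y) (δ := 2 * δ)
            (by linarith) (by linarith)
          rwa [Real.exp_neg, ← div_eq_mul_inv, div_le_iff₀ (Real.exp_pos _)] at hslow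
      _ = B y * Real.exp (2 * δ) * ∫ u in Set.Ioc (-(T * δ)) (T * δ), K u := integral_const_mul _ _
      _ ≤ B y * Real.exp (2 * δ) * ∫ u, K u :=
          mul_le_mul_of_nonneg_left (setIntegral_le_integral hK (.of_forall hK0)) hBy
  · rw [← integral_const_mul]
    exact setIntegral_mono_on hint.integrableOn (hK.const_mul C).integrableOn
      measurableSet_Ioc.compl fun u _ =>
        mul_le_mul_of_nonneg_right ((le_abs_self _).trans (hBC _)) (hK0 u)

/-- Averaging `B` at scale `δ²` around the point `y - δ` bounds `B y` from below, up to the factor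
`exp (2δ)` and the mass of `K` outside `[-1/δ, 1/δ]`. -/
lemma SlowlyDecreasing.eventually_gt_of_tendsto_average (hKpos : 0 < ∫ u, K u) {A : ℝ}
    (hav : ∀ T : ℝ, 0 < T →
      Tendsto (fun y => ∫ u, B (y - u / T) * K u) atTop (𝓝 (A * ∫ u, K u)))
    {a : ℝ} (ha : a < A) : ∀ᶠ y in atTop, a < B y := by
  have hlim : Tendsto (fun δ => a * Real.exp (2 * δ) * (∫ u, K u) +
      C * ((∫ u, K u) - ∫ u in Set.Ioc (-δ⁻¹) δ⁻¹, K u)) (𝓝[>] 0) (𝓝 (a * ∫ u, K u)) := by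
    simpa using (((tendsto_exp_mul_nhdsGT_zero 2).const_mul a).mul_const (∫ u, K u)).add
      (((tendsto_integral_Ioc_inv hK).const_sub (∫ u, K u)).const_mul C)
  obtain ⟨δ, hδlt, hδ : 0 < δ⟩ := ((hlim.eventually_lt_const
    (mul_lt_mul_of_pos_right ha hKpos)).and self_mem_nhdsWithin).exists
  have hT : 0 < (δ ^ 2)⁻¹ := by positivity
  have hTδ : (δ ^ 2)⁻¹ * δ = δ⁻¹ := by field_simp
  filter_upwards [((hav _ hT).comp (tendsto_atTop_add_const_right _ (-δ)
    tendsto_id)).eventually_const_lt hδlt] with y hy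
  have hle := hB.average_le hK0 hK hBm hB0 hBC (δ := δ) hT y
  rw [hTδ, setIntegral_compl measurableSet_Ioc hK] at hle
  have hlt := lt_of_add_lt_add_right (hy.trans_le hle)
  exact lt_of_mul_lt_mul_right (lt_of_mul_lt_mul_right hlt hKpos.le) (Real.exp_pos _).le

lemma SlowlyDecreasing.eventually_lt_of_tendsto_average (hKpos : 0 < ∫ u, K u) {A : ℝ}
    (hav : ∀ T : ℝ, 0 < T →
      Tendsto (fun y => ∫ u, B (y - u / T) * K u) atTop (𝓝 (A * ∫ u, K u)))
    {a : ℝ} (ha : A < a) : ∀ᶠ y in atTop, B y < a := by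
  have hlim : Tendsto (fun δ => a * Real.exp (-2 * δ) * ∫ u in Set.Ioc (-δ⁻¹) δ⁻¹, K u) (𝓝[>] 0)
      (𝓝 (a * ∫ u, K u)) := by
    simpa using ((tendsto_exp_mul_nhdsGT_zero (-2)).const_mul a).mul (tendsto_integral_Ioc_inv hK)
  obtain ⟨δ, ⟨hδlt, hδpos⟩, hδ : 0 < δ⟩ := (((hlim.eventually_const_lt
    (mul_lt_mul_of_pos_right ha hKpos)).and
    ((tendsto_integral_Ioc_inv hK).eventually_const_lt hKpos)).and self_mem_nhdsWithin).exists
  have hT : 0 < (δ ^ 2)⁻¹ := by positivity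
  have hTδ : (δ ^ 2)⁻¹ * δ = δ⁻¹ := by field_simp
  filter_upwards [((hav _ hT).comp (tendsto_atTop_add_const_right _ δ
    tendsto_id)).eventually_lt_const hδlt] with y hy
  have hle := hB.mul_integral_le_average hK0 hK hBm hB0 hBC (δ := δ) hT y
  rw [hTδ] at hle
  have hlt := lt_of_mul_lt_mul_right (hle.trans_lt hy) hδpos.le
  rw [← neg_mul] at hlt
  exact lt_of_mul_lt_mul_right hlt (Real.exp_pos _).le

theorem SlowlyDecreasing.tendsto_of_tendsto_average (hKpos : 0 < ∫ u, K u) {A : ℝ}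
    (hav : ∀ T : ℝ, 0 < T →
      Tendsto (fun y => ∫ u, B (y - u / T) * K u) atTop (𝓝 (A * ∫ u, K u))) :
    Tendsto B atTop (𝓝 A) :=
  tendsto_order.2
    ⟨fun _ => hB.eventually_gt_of_tendsto_average hK0 hK hBm hB0 hBC hKpos hav,
      fun _ => hB.eventually_lt_of_tendsto_average hK0 hK hBm hB0 hBC hKpos hav⟩

end Pointwise

end Averages

/-- The summatory function `∑_{k ≤ x} a k` divided by `x`, in the logarithmic variable
`v = log x`. -/
noncomputable def logAverage (a : ℕ → ℝ) (v : ℝ) : ℝ :=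
  (∑ k ∈ Finset.Icc 1 ⌊Real.exp v⌋₊, a k) * Real.exp (-v)

section LogAverage

variable {a : ℕ → ℝ} {C : ℝ}

lemma logAverage_eq_zero_of_neg (a : ℕ → ℝ) {v : ℝ} (hv : v < 0) : logAverage a v = 0 := by
  simp [logAverage, Nat.floor_eq_zero.mpr (Real.exp_lt_one_iff.mpr hv)]

lemma logAverage_log (a : ℕ → ℝ) {x : ℝ} (hx : 0 < x) :
    logAverage a (Real.log x) = (∑ k ∈ Finset.Icc 1 ⌊x⌋₊, a k) / x := by
  rw [logAverage, Real.exp_neg, Real.exp_log hx, div_eq_mul_inv]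

lemma logAverage_le (hC : ∀ x : ℝ, 0 ≤ x → ∑ k ∈ Finset.Icc 1 ⌊x⌋₊, a k ≤ C * x) (v : ℝ) :
    logAverage a v ≤ C := by
  rw [logAverage, Real.exp_neg, ← div_eq_mul_inv, div_le_iff₀ (Real.exp_pos v)]
  exact hC _ (Real.exp_pos v).le

lemma sum_Icc_one_floor_mono (ha : ∀ n, 0 ≤ a n) :
    Monotone fun x : ℝ => ∑ k ∈ Finset.Icc 1 ⌊x⌋₊, a k := fun _ _ hxy =>
  Finset.sum_le_sum_of_subset_of_nonneg (Finset.Icc_subset_Icc_right (Nat.floor_mono hxy))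
    fun i _ _ => ha i

lemma logAverage_nonneg (ha : ∀ n, 0 ≤ a n) (v : ℝ) : 0 ≤ logAverage a v :=
  mul_nonneg (Finset.sum_nonneg fun i _ => ha i) (Real.exp_pos _).le

lemma measurable_logAverage (ha : ∀ n, 0 ≤ a n) : Measurable (logAverage a) :=
  ((sum_Icc_one_floor_mono ha).measurable.comp Real.measurable_exp).mul (by fun_prop)

lemma slowlyDecreasing_logAverage (ha : ∀ n, 0 ≤ a n) : SlowlyDecreasing (logAverage a) := by
  intro v w hvw
  simp only [logAverage, mul_assoc, ← Real.exp_add, neg_add_cancel, Real.exp_zero, mul_one]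
  exact sum_Icc_one_floor_mono ha (Real.exp_le_exp.mpr hvw)

lemma integral_logAverage_mul_cexp (ha : ∀ n, 0 ≤ a n)
    (hC : ∀ x : ℝ, 0 ≤ x → ∑ k ∈ Finset.Icc 1 ⌊x⌋₊, a k ≤ C * x) {s : ℂ} (hs : 0 < s.re) :
    ∫ v in Set.Ioi (0 : ℝ), (logAverage a v : ℂ) * Complex.exp (-s * v) =
      LSeries (fun n => (a n : ℂ)) (s + 1) / (s + 1) := by
  have hO : (fun n : ℕ => ∑ k ∈ Finset.Icc 1 n, a k) =O[atTop] fun n => (n : ℝ) ^ (1 : ℝ) := by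
    refine Asymptotics.IsBigO.of_bound C (.of_forall fun n => ?_)
    rw [Real.norm_of_nonneg (Finset.sum_nonneg fun i _ => ha i), Real.rpow_one,
      Real.norm_of_nonneg n.cast_nonneg]
    simpa using hC n n.cast_nonneg
  have hs1 : s + 1 ≠ 0 := Complex.ne_zero_of_re_pos (by simpa using by linarith)
  have hsubst := integral_comp_exp_Ioi (fun t : ℝ =>
    (∑ k ∈ Finset.Icc 1 ⌊t⌋₊, (a k : ℂ)) * (t : ℂ) ^ (-(s + 1 + 1))) 0
  rw [Real.exp_zero] at hsubst
  rw [LSeries_eq_mul_integral_of_nonneg a zero_le_one (by simp [hs]) hO ha,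
    mul_div_cancel_left₀ _ hs1, ← hsubst]
  refine integral_congr_ae (.of_forall fun v => ?_)
  have hcpow : ((Real.exp v : ℝ) : ℂ) ^ (-(s + 1 + 1)) = Complex.exp (v * (-(s + 1 + 1))) := by
    rw [Complex.cpow_def_of_ne_zero (by exact_mod_cast (Real.exp_pos v).ne'),
      ← Complex.ofReal_log (Real.exp_pos v).le, Real.log_exp]
  have hexp : Complex.exp v * Complex.exp (v * (-(s + 1 + 1))) =
      Complex.exp (-v) * Complex.exp (-s * v) := by
    rw [← Complex.exp_add, ← Complex.exp_add]
    ring_nf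
  simp only [logAverage, Complex.real_smul, hcpow]
  push_cast
  linear_combination -(∑ k ∈ Finset.Icc 1 ⌊Real.exp v⌋₊, (a k : ℂ)) * hexp

lemma integral_logAverage_sub_mul_cexp (ha : ∀ n, 0 ≤ a n)
    (hC : ∀ x : ℝ, 0 ≤ x → ∑ k ∈ Finset.Icc 1 ⌊x⌋₊, a k ≤ C * x) (A : ℝ) {s : ℂ} (hs : 0 < s.re) :
    ∫ v in Set.Ioi (0 : ℝ), ((logAverage a v - A : ℝ) : ℂ) * Complex.exp (-s * v) =
      LSeries (fun n => (a n : ℂ)) (s + 1) / (s + 1) - A / s := by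
  have hs' : (-s).re < 0 := by simpa using hs
  have hexp : IntegrableOn (fun v : ℝ => Complex.exp (-s * v)) (Set.Ioi 0) :=
    integrableOn_exp_mul_complex_Ioi hs' 0
  have hprod : IntegrableOn (fun v : ℝ => (logAverage a v : ℂ) * Complex.exp (-s * v))
      (Set.Ioi 0) := by
    refine hexp.bdd_mul (c := C)
      (Complex.measurable_ofReal.comp (measurable_logAverage ha)).aestronglyMeasurable
      (.of_forall fun v => ?_)
    rw [Complex.norm_real, Real.norm_of_nonneg (logAverage_nonneg ha v)]
    exact logAverage_le hC v
  simp_rw [Complex.ofReal_sub, sub_mul]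
  rw [integral_sub hprod (hexp.const_mul _), integral_logAverage_mul_cexp ha hC hs,
    integral_const_mul, integral_exp_mul_complex_Ioi hs']
  simp [div_eq_mul_inv]

end LogAverage

theorem wiener_ikehara {a : ℕ → ℝ} (ha : ∀ n, 0 ≤ a n) {C : ℝ}
    (hC : ∀ x : ℝ, 0 ≤ x → ∑ k ∈ Finset.Icc 1 ⌊x⌋₊, a k ≤ C * x)
    {A : ℝ} {G : ℂ → ℂ} (hG : ContinuousOn G {s | 1 ≤ s.re})
    (hGL : ∀ s : ℂ, 1 < s.re → G s = LSeries (fun n => (a n : ℂ)) s - A / (s - 1)) :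
    Tendsto (fun x : ℝ => (∑ k ∈ Finset.Icc 1 ⌊x⌋₊, a k) / x) atTop (𝓝 A) := by
  have hbdd (v : ℝ) : |logAverage a v| ≤ C :=
    (abs_of_nonneg (logAverage_nonneg ha v)).trans_le (logAverage_le hC v)
  have hre {s : ℂ} (hs : 0 ≤ s.re) : s + 1 ≠ 0 :=
    Complex.ne_zero_of_re_pos (by simpa using by linarith)
  have hcont : ContinuousOn (fun s => (G (s + 1) - A) / (s + 1)) {s : ℂ | 0 ≤ s.re} :=
    ((hG.comp (by fun_prop) fun s hs => by simpa using hs).sub continuousOn_const).div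
      (by fun_prop) fun s hs => hre hs
  have hlaplace (s : ℂ) (hs : 0 < s.re) :
      ∫ v in Set.Ioi (0 : ℝ), ((logAverage a v - A : ℝ) : ℂ) * Complex.exp (-s * v) =
        (G (s + 1) - A) / (s + 1) := by
    have hs0 : s ≠ 0 := Complex.ne_zero_of_re_pos hs
    have hs1 := hre hs.le
    rw [integral_logAverage_sub_mul_cexp ha hC A hs, hGL _ (by simpa using hs),
      add_sub_cancel_right]
    field_simp
    ring
  have hlim : Tendsto (logAverage a) atTop (𝓝 A) :=
    (slowlyDecreasing_logAverage ha).tendsto_of_tendsto_average fejerKernel_nonneg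
      integrable_fejerKernel (measurable_logAverage ha) (logAverage_nonneg ha) hbdd
      integral_fejerKernel_pos fun T hT =>
        tendsto_average_of_tendsto_sub integrable_fejerKernel (measurable_logAverage ha) hbdd
          (fun v hv => logAverage_eq_zero_of_neg a hv) hT <|
          tendsto_integral_mul_fejerKernel_of_laplace (b := fun v => logAverage a v - A)
            ((measurable_logAverage ha).sub_const A)
            (fun v => (abs_sub _ _).trans (add_le_add_left (hbdd v) |A|)) hcont hlaplace hT
  refine (hlim.comp Real.tendsto_log_atTop).congr' ?_
  filter_upwards [eventually_gt_atTop 0] with x hx using logAverage_log a hx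

/-! ### The prime number theorem in arithmetic progressions -/

open ArithmeticFunction (vonMangoldt)
open ArithmeticFunction.vonMangoldt (residueClass LFunctionResidueClassAux)

theorem tendsto_sum_vonMangoldt_residueClass_div {q : ℕ} [NeZero q] {a : ZMod q} (ha : IsUnit a) :
    Tendsto (fun x : ℝ => (∑ k ∈ Finset.Icc 1 ⌊x⌋₊, residueClass a k) / x) atTop
      (𝓝 (q.totient : ℝ)⁻¹) := by
  refine wiener_ikehara (ArithmeticFunction.vonMangoldt.residueClass_nonneg a)
    (C := Real.log 4 + 4) (G := LFunctionResidueClassAux a) (fun x hx => ?_)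
    (ArithmeticFunction.vonMangoldt.continuousOn_LFunctionResidueClassAux a) fun s hs => ?_
  · refine le_trans ?_ (Chebyshev.psi_le_const_mul_self hx)
    rw [Chebyshev.psi, ← Finset.Icc_succ_left_eq_Ioc]
    exact Finset.sum_le_sum fun i _ => ArithmeticFunction.vonMangoldt.residueClass_le a i
  · rw [ArithmeticFunction.vonMangoldt.eqOn_LFunctionResidueClassAux ha hs]
    simp

/-- The sequence `c` has mean value `α` over the primes, each prime `p` being counted with weight
`log p`; by the prime number theorem these weights have density one. -/
def HasLogMean (c : ℕ → ℝ) (α : ℝ) : Prop :=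
  Tendsto (fun n : ℕ => (∑ p ∈ n.primesBelow, c p * Real.log p) / n) atTop (𝓝 α)

lemma tendsto_div_of_tendsto_succ_div {f : ℕ → ℝ} {α : ℝ}
    (h : Tendsto (fun n : ℕ => f (n + 1) / n) atTop (𝓝 α)) :
    Tendsto (fun n : ℕ => f n / n) atTop (𝓝 α) := by
  rw [← tendsto_add_atTop_iff_nat 1]
  have hmul := h.mul (tendsto_natCast_div_add_atTop (1 : ℝ))
  rw [mul_one] at hmul
  refine hmul.congr' ?_
  filter_upwards [eventually_gt_atTop 0] with n hn
  push_cast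
  field_simp

lemma sum_Icc_one_eq_sum_range_succ {f : ℕ → ℝ} (h0 : f 0 = 0) (n : ℕ) :
    ∑ k ∈ Finset.Icc 1 n, f k = ∑ k ∈ Finset.range (n + 1), f k := by
  rw [Finset.range_eq_Ico, Finset.sum_eq_sum_Ico_succ_bot n.succ_pos, h0, zero_add]
  rfl

lemma abs_sum_residueClass_sub_le {q : ℕ} (a : ZMod q) (n : ℕ) :
    |∑ k ∈ Finset.Icc 1 n, residueClass a k -
        ∑ p ∈ (n + 1).primesBelow, (if (p : ZMod q) = a then 1 else 0) * Real.log p| ≤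
      Chebyshev.psi n - Chebyshev.theta n := by
  have hterm (k : ℕ) :
      |residueClass a k - if k.Prime then (if (k : ZMod q) = a then 1 else 0) * Real.log k else 0| ≤
        vonMangoldt k - if k.Prime then Real.log k else 0 := by
    have hΛ : 0 ≤ vonMangoldt k := ArithmeticFunction.vonMangoldt_nonneg
    by_cases hk : k.Prime <;> by_cases hka : (k : ZMod q) = a <;>
      simp [residueClass, Set.indicator, hk, hka, ArithmeticFunction.vonMangoldt_apply_prime,
        abs_of_nonneg hΛ]
  have hrange : Finset.Icc 0 n = Finset.range (n + 1) := (Nat.range_succ_eq_Icc_zero n).symm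
  rw [Chebyshev.psi_eq_sum_Icc, Chebyshev.theta_eq_sum_Icc, Nat.floor_natCast, hrange,
    sum_Icc_one_eq_sum_range_succ (ArithmeticFunction.vonMangoldt.residueClass_apply_zero a),
    Nat.primesBelow, Finset.sum_filter, Finset.sum_filter, ← Finset.sum_sub_distrib,
    ← Finset.sum_sub_distrib]
  exact (Finset.abs_sum_le_sum_abs _ _).trans (Finset.sum_le_sum fun k _ => hterm k)

theorem hasLogMean_residueClass {q : ℕ} [NeZero q] {a : ZMod q} (ha : IsUnit a) :
    HasLogMean (fun p => if (p : ZMod q) = a then 1 else 0) (q.totient : ℝ)⁻¹ := by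
  obtain ⟨C, hC⟩ := Chebyshev.psi_sub_theta_le_mul_sqrt
  have hsqrt : Tendsto (fun n : ℕ => C * (Real.sqrt n)⁻¹) atTop (𝓝 0) := by
    simpa using (tendsto_inv_atTop_zero.comp
      (Real.tendsto_sqrt_atTop.comp tendsto_natCast_atTop_atTop)).const_mul C
  have hdiff : Tendsto (fun n : ℕ => (∑ k ∈ Finset.Icc 1 n, residueClass a k) / (n : ℝ) -
      (∑ p ∈ (n + 1).primesBelow, (if (p : ZMod q) = a then 1 else 0) * Real.log p) / n)
      atTop (𝓝 0) := by
    refine squeeze_zero_norm (fun n => ?_) hsqrt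
    rw [← sub_div, norm_div, Real.norm_natCast]
    calc _ ≤ C * √n / n := by
          gcongr
          exact (abs_sum_residueClass_sub_le a n).trans (hC n)
      _ = C * (√n)⁻¹ := by rw [mul_div_assoc, Real.sqrt_div_self']; simp
  have hψ := (tendsto_sum_vonMangoldt_residueClass_div ha).comp tendsto_natCast_atTop_atTop
  refine tendsto_div_of_tendsto_succ_div ?_
  simpa [Function.comp_def] using hψ.sub hdiff

section HasLogMean

variable {c c' : ℕ → ℝ} {α α' : ℝ}

lemma HasLogMean.congr (B : ℕ) (hc : HasLogMean c α) (h : ∀ p, p.Prime → B < p → c p = c' p) :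
    HasLogMean c' α := by
  have hdiff : Tendsto (fun n : ℕ =>
      (∑ p ∈ (B + 1).primesBelow, (c' p - c p) * Real.log p) / (n : ℝ)) atTop (𝓝 0) :=
    tendsto_const_nhds.div_atTop tendsto_natCast_atTop_atTop
  have hsum := Tendsto.add hc hdiff
  rw [add_zero] at hsum
  refine hsum.congr' ?_
  filter_upwards [eventually_ge_atTop (B + 1)] with n hn
  have hsub : (B + 1).primesBelow ⊆ n.primesBelow :=
    Finset.filter_subset_filter _ (Finset.range_subset_range.mpr hn)
  rw [← add_div, Finset.sum_subset hsub fun p hp hpB => ?_, ← Finset.sum_add_distrib]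
  · simp only [sub_mul, add_sub_cancel]
  · have hprime := Nat.prime_of_mem_primesBelow hp
    have hBp : B < p := by
      by_contra! hle
      exact hpB (Nat.mem_primesBelow.mpr ⟨Nat.lt_succ_of_le hle, hprime⟩)
    rw [h p hprime hBp, sub_self, zero_mul]

lemma HasLogMean.const_mul (hc : HasLogMean c α) (r : ℝ) :
    HasLogMean (fun p => r * c p) (r * α) :=
  (Tendsto.const_mul r hc).congr fun n => by
    simp only [mul_assoc, ← Finset.mul_sum, mul_div_assoc]

lemma HasLogMean.sub (hc : HasLogMean c α) (hc' : HasLogMean c' α') :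
    HasLogMean (fun p => c p - c' p) (α - α') :=
  (Tendsto.sub hc hc').congr fun n => by simp only [sub_mul, Finset.sum_sub_distrib, sub_div]

lemma HasLogMean.sum {ι : Type*} {s : Finset ι} {c : ι → ℕ → ℝ} {α : ι → ℝ}
    (h : ∀ i ∈ s, HasLogMean (c i) (α i)) :
    HasLogMean (fun p => ∑ i ∈ s, c i p) (∑ i ∈ s, α i) := by
  refine (tendsto_finsetSum s h).congr fun n => ?_
  simp only [Finset.sum_mul, Finset.sum_div]
  exact Finset.sum_comm

theorem hasLogMean_modEq_one (n : ℕ) [NeZero n] :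
    HasLogMean (fun p => if p ≡ 1 [MOD n] then 1 else 0) (n.totient : ℝ)⁻¹ :=
  (hasLogMean_residueClass isUnit_one).congr 0 fun p _ _ => by
    simp only [← ZMod.natCast_eq_natCast_iff, Nat.cast_one]

lemma hasLogMean_of_periodic {M : ℕ} [NeZero M] (hc : ∀ b, b.Coprime M → c (b % M) = c b) :
    HasLogMean c ((∑ x : (ZMod M)ˣ, c (x : ZMod M).val) * (M.totient : ℝ)⁻¹) := by
  have hsum := HasLogMean.sum (s := Finset.univ) fun (x : (ZMod M)ˣ) _ =>
    (hasLogMean_residueClass x.isUnit).const_mul (c (x : ZMod M).val)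
  rw [← Finset.sum_mul] at hsum
  refine hsum.congr M fun p hp hMp => ?_
  have hcop : p.Coprime M := (Nat.coprime_of_lt_prime (NeZero.ne M) hMp hp)
  simp only [mul_ite, mul_one, mul_zero]
  rw [Finset.sum_eq_single_of_mem (ZMod.unitOfCoprime p hcop) (Finset.mem_univ _)]
  · simp [ZMod.val_natCast, hc p hcop]
  · exact fun x _ hx => if_neg fun h => hx (Units.ext (by simpa using h.symm))

lemma hasLogMean_zero_of_antiperiodic {M : ℕ} [NeZero M]
    (hc : ∀ b, b.Coprime M → c (b % M) = c b) {u : ℕ} (hu : u.Coprime M)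
    (hanti : ∀ b, b.Coprime M → c (u * b) = -c b) : HasLogMean c 0 := by
  have hval (x : (ZMod M)ˣ) : (x : ZMod M).val.Coprime M := ZMod.val_coe_unit_coprime x
  have hsum : ∑ x : (ZMod M)ˣ, c (x : ZMod M).val = -∑ x : (ZMod M)ˣ, c (x : ZMod M).val := by
    rw [← Finset.sum_neg_distrib, ← Equiv.sum_comp (Equiv.mulLeft (ZMod.unitOfCoprime u hu))]
    refine Finset.sum_congr rfl fun x _ => ?_
    rw [← hanti _ (hval x), ← hc _ (hu.mul_left (hval x))]
    simp [ZMod.val_mul, ZMod.val_natCast]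
  have hmean := hasLogMean_of_periodic hc
  rwa [self_eq_neg.mp hsum, zero_mul] at hmean

end HasLogMean

/-! ### The quadratic character modulo its discriminant -/

/-- The discriminant of `ℚ(√a)`, for `a` squarefree. -/
def quadraticDiscr (a : ℤ) : ℤ := if a % 4 = 1 then a else 4 * a

lemma jacobiSym_congr_right {a : ℤ} {b b' : ℕ} (hb : Odd b) (hb' : Odd b')
    (h : b ≡ b' [MOD 4 * a.natAbs]) : jacobiSym a b = jacobiSym a b' := by
  rw [jacobiSym.mod_right a hb, h, ← jacobiSym.mod_right a hb']

lemma jacobiSym_neg_one_of_mod_four_eq_one {u : ℕ} (hu : u % 4 = 1) : jacobiSym (-1) u = 1 := by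
  rw [jacobiSym.at_neg_one (Nat.odd_iff.mpr (by omega)), ZMod.χ₄_nat_one_mod_four hu]

lemma jacobiSym_neg_one_of_mod_four_eq_three {u : ℕ} (hu : u % 4 = 3) :
    jacobiSym (-1) u = -1 := by
  rw [jacobiSym.at_neg_one (Nat.odd_iff.mpr (by omega)), ZMod.χ₄_nat_three_mod_four hu]

lemma jacobiSym_two_of_mod_eight_eq_five {u : ℕ} (hu : u % 8 = 5) : jacobiSym 2 u = -1 := by
  rw [jacobiSym.at_two (Nat.odd_iff.mpr (by omega)), ZMod.χ₈_nat_mod_eight, hu]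
  decide

lemma jacobiSym_eq_jacobiSym_natAbs {a : ℤ} (ha : a % 4 = 1) {u : ℕ} (hu : Odd u) :
    jacobiSym a u = jacobiSym u a.natAbs := by
  obtain ⟨m, rfl | rfl⟩ := a.eq_nat_or_neg
  · rw [Int.natAbs_natCast]
    exact jacobiSym.quadratic_reciprocity_one_mod_four (by omega) hu
  · have hm : m % 4 = 3 := by omega
    rw [Int.natAbs_neg, Int.natAbs_natCast, neg_eq_neg_one_mul, jacobiSym.mul_left]
    have hu2 := Nat.odd_iff.mp hu
    obtain h1 | h3 : u % 4 = 1 ∨ u % 4 = 3 := by omega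
    · rw [jacobiSym_neg_one_of_mod_four_eq_one h1, one_mul,
        ← jacobiSym.quadratic_reciprocity_one_mod_four h1 (Nat.odd_iff.mpr (by omega))]
    · rw [jacobiSym_neg_one_of_mod_four_eq_three h3,
        jacobiSym.quadratic_reciprocity_three_mod_four hm h3, neg_one_mul, neg_neg]

theorem jacobiSym_eq_one_of_modEq_one {a : ℤ} {u : ℕ} (hu : Odd u)
    (h : u ≡ 1 [MOD (quadraticDiscr a).natAbs]) : jacobiSym a u = 1 := by
  unfold quadraticDiscr at h
  split_ifs at h with ha
  · have hmod : (u : ℤ) ≡ (1 : ℕ) [ZMOD a.natAbs] := Int.natCast_modEq_iff.mpr h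
    rw [jacobiSym_eq_jacobiSym_natAbs ha hu, jacobiSym.mod_left' hmod, Nat.cast_one,
      jacobiSym.one_left]
  · rw [Int.natAbs_mul] at h
    rw [jacobiSym_congr_right hu odd_one h, jacobiSym.one_right]

lemma exists_prime_dvd_not_dvd {m n : ℕ} (hm : Squarefree m) (h : ¬ m ∣ n) :
    ∃ q, q.Prime ∧ q ∣ m ∧ ¬ q ∣ n := by
  by_contra! hall
  apply h
  rw [← Nat.prod_primeFactors_of_squarefree hm]
  exact Finset.prod_primes_dvd n (fun q hq => (Nat.prime_of_mem_primeFactors hq).prime)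
    fun q hq => hall q (Nat.prime_of_mem_primeFactors hq) (Nat.dvd_of_mem_primeFactors hq)

lemma gcd_prime_pow_succ_dvd {p k n : ℕ} (hp : p.Prime) (hn : ¬ p ^ (k + 1) ∣ n) :
    Nat.gcd (p ^ (k + 1)) n ∣ p ^ k := by
  obtain ⟨i, hi, hgcd⟩ := (Nat.dvd_prime_pow hp).mp (Nat.gcd_dvd_left (p ^ (k + 1)) n)
  have hne : i ≠ k + 1 := by
    rintro rfl
    exact hn (hgcd ▸ Nat.gcd_dvd_right (p ^ (k + 1)) n)
  rw [hgcd]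
  exact pow_dvd_pow p (by omega)

lemma exists_jacobiSym_eq_neg_one_of_prime_dvd {a : ℤ} (ha : Squarefree a) {n q : ℕ}
    (hq : q.Prime) (hq2 : q ≠ 2) (hqa : (q : ℤ) ∣ a) (hqn : ¬ q ∣ n) :
    ∃ u : ℕ, Odd u ∧ u ≡ 1 [MOD n] ∧ jacobiSym a u = -1 := by
  have : Fact q.Prime := ⟨hq⟩
  obtain ⟨r, rfl⟩ := hqa
  have hqr : ¬ q ∣ r.natAbs := fun hdvd =>
    hq.one_lt.ne' <| by
      simpa [Int.isUnit_iff_natAbs_eq] using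
        ha q (mul_dvd_mul_left _ (Int.natCast_dvd.mpr hdvd))
  have hcop : q.Coprime (4 * r.natAbs * n) := by
    refine Nat.Coprime.mul_right (Nat.Coprime.mul_right ?_ ?_) ?_
    · exact ((Nat.coprime_primes hq Nat.prime_two).mpr hq2).pow_right 2
    · exact hq.coprime_iff_not_dvd.mpr hqr
    · exact hq.coprime_iff_not_dvd.mpr hqn
  obtain ⟨x, hx⟩ := FiniteField.exists_nonsquare (F := ZMod q) (by rwa [ZMod.ringChar_zmod_n])
  obtain ⟨u, hux, hu1⟩ := Nat.chineseRemainder hcop x.val 1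
  have hu4 : u % 4 = 1 := hu1.of_dvd ⟨r.natAbs * n, by ring⟩
  have hodd : Odd u := Nat.odd_iff.mpr (by omega)
  have hJr : jacobiSym r u = 1 := by
    rw [jacobiSym_congr_right hodd odd_one (hu1.of_dvd (Dvd.intro _ rfl)), jacobiSym.one_right]
  have hJq : jacobiSym u q = -1 := by
    rw [ZMod.nonsquare_iff_jacobiSym_eq_neg_one, Int.cast_natCast,
      (ZMod.natCast_eq_natCast_iff u x.val q).mpr hux, ZMod.natCast_zmod_val]
    exact hx
  refine ⟨u, hodd, hu1.of_dvd (Dvd.intro_left _ rfl), ?_⟩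
  rw [jacobiSym.mul_left, hJr, mul_one,
    jacobiSym.quadratic_reciprocity_one_mod_four' (hq.odd_of_ne_two hq2) hu4, hJq]

lemma exists_jacobiSym_eq_neg_one_of_mod_four_eq_three {a : ℤ} (ha : a % 4 = 3) {n : ℕ}
    (hn : ¬ 4 ∣ n) : ∃ u : ℕ, Odd u ∧ u ≡ 1 [MOD n] ∧ jacobiSym a u = -1 := by
  have hcop : Nat.Coprime 4 a.natAbs :=
    Nat.Coprime.pow_left 2 (Nat.coprime_two_left.mpr (Nat.odd_iff.mpr (by omega)))
  have hgcd : Nat.gcd (2 ^ 2) (a.natAbs * n) ∣ 2 ^ 1 :=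
    gcd_prime_pow_succ_dvd Nat.prime_two fun h => hn (hcop.dvd_of_dvd_mul_left h)
  obtain ⟨u, hu4, hu1⟩ := Nat.chineseRemainder' ((by decide : 3 ≡ 1 [MOD 2]).of_dvd hgcd)
  have hodd : Odd u := Nat.odd_iff.mpr (by have : u % 4 = 3 := hu4; omega)
  have hJ : jacobiSym (-a) u = 1 := by
    refine jacobiSym_eq_one_of_modEq_one hodd ?_
    rw [quadraticDiscr, if_pos (by omega), Int.natAbs_neg]
    exact hu1.of_dvd (Dvd.intro _ rfl)
  refine ⟨u, hodd, hu1.of_dvd (Dvd.intro_left _ rfl), ?_⟩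
  rw [← neg_neg a, neg_eq_neg_one_mul, jacobiSym.mul_left, hJ,
    jacobiSym_neg_one_of_mod_four_eq_three hu4, mul_one]

lemma exists_jacobiSym_two_mul_eq_neg_one {m : ℤ} (hm : Odd m) {n : ℕ} (hn : ¬ 8 ∣ n) :
    ∃ u : ℕ, Odd u ∧ u ≡ 1 [MOD n] ∧ jacobiSym (2 * m) u = -1 := by
  have hodd_abs : Odd m.natAbs := Int.natAbs_odd.mpr hm
  have hcop : Nat.Coprime 8 m.natAbs := Nat.Coprime.pow_left 3 (Nat.coprime_two_left.mpr hodd_abs)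
  have hgcd : Nat.gcd (2 ^ 3) (m.natAbs * n) ∣ 2 ^ 2 :=
    gcd_prime_pow_succ_dvd Nat.prime_two fun h => hn (hcop.dvd_of_dvd_mul_left h)
  obtain ⟨u, hu8, hu1⟩ := Nat.chineseRemainder' ((by decide : 5 ≡ 1 [MOD 4]).of_dvd hgcd)
  have hu8' : u % 8 = 5 := hu8
  have hodd : Odd u := Nat.odd_iff.mpr (by omega)
  have hu4m : u ≡ 1 [MOD 4 * m.natAbs] := by
    refine (Nat.modEq_and_modEq_iff_modEq_mul (hcop.coprime_dvd_left (by decide))).mp ⟨?_, ?_⟩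
    · exact (by omega : u % 4 = 1)
    · exact hu1.of_dvd (Dvd.intro _ rfl)
  refine ⟨u, hodd, hu1.of_dvd (Dvd.intro_left _ rfl), ?_⟩
  rw [jacobiSym.mul_left, jacobiSym_two_of_mod_eight_eq_five hu8',
    jacobiSym_congr_right hodd odd_one hu4m, jacobiSym.one_right, mul_one]

theorem exists_jacobiSym_eq_neg_one {a : ℤ} (ha : Squarefree a) {n : ℕ}
    (hn : ¬ (quadraticDiscr a).natAbs ∣ n) :
    ∃ u : ℕ, Odd u ∧ u ≡ 1 [MOD n] ∧ jacobiSym a u = -1 := by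
  by_cases hodd : ∃ q : ℕ, q.Prime ∧ q ≠ 2 ∧ q ∣ a.natAbs ∧ ¬ q ∣ n
  · obtain ⟨q, hq, hq2, hqa, hqn⟩ := hodd
    exact exists_jacobiSym_eq_neg_one_of_prime_dvd ha hq hq2 (Int.natCast_dvd.mpr hqa) hqn
  have hdvd {m : ℕ} (hm : Odd m) (hma : m ∣ a.natAbs) : m ∣ n := by
    by_contra hmn
    obtain ⟨q, hq, hqm, hqn⟩ :=
      exists_prime_dvd_not_dvd ((Int.squarefree_natAbs.mpr ha).squarefree_of_dvd hma) hmn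
    exact hodd ⟨q, hq, by rintro rfl; exact Nat.not_even_iff_odd.mpr hm (even_iff_two_dvd.mpr hqm),
      hqm.trans hma, hqn⟩
  unfold quadraticDiscr at hn
  split_ifs at hn with h1
  · exact absurd (hdvd (Nat.odd_iff.mpr (by omega)) dvd_rfl) hn
  rcases a.even_or_odd with ⟨m, hm⟩ | hoda
  · obtain rfl : a = 2 * m := by omega
    have hm : Odd m := by
      by_contra heven
      obtain ⟨t, rfl⟩ := (Int.not_odd_iff_even.mp heven).two_dvd
      have h2 := ha 2 ⟨t, by ring⟩
      simp [Int.isUnit_iff] at h2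
    have habs : Odd m.natAbs := Int.natAbs_odd.mpr hm
    refine exists_jacobiSym_two_mul_eq_neg_one hm fun h8 => hn ?_
    rw [← mul_assoc, Int.natAbs_mul]
    refine (Nat.Coprime.pow_left 3 (Nat.coprime_two_left.mpr habs)).mul_dvd_of_dvd_of_dvd h8 ?_
    exact hdvd habs (by rw [Int.natAbs_mul]; exact Dvd.intro_left _ rfl)
  · have habs : Odd a.natAbs := Int.natAbs_odd.mpr hoda
    refine exists_jacobiSym_eq_neg_one_of_mod_four_eq_three (by grind) fun h4 => hn ?_
    rw [Int.natAbs_mul]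
    exact (Nat.Coprime.pow_left 2 (Nat.coprime_two_left.mpr habs)).mul_dvd_of_dvd_of_dvd h4
      (hdvd habs dvd_rfl)

lemma hasLogMean_jacobiSym_zero {a : ℤ} {n u : ℕ} (hu : Odd u)
    (hu1 : u ≡ 1 [MOD n]) (hJ : jacobiSym a u = -1) (ha : a ≠ 0) (hn : n ≠ 0) :
    HasLogMean (fun p => (jacobiSym a p : ℝ) * if p ≡ 1 [MOD n] then 1 else 0) 0 := by
  have : NeZero (4 * a.natAbs * n) := ⟨by simp [ha, hn]⟩
  have hodd {b : ℕ} (hb : b.Coprime (4 * a.natAbs * n)) : Odd b :=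
    Nat.coprime_two_right.mp (hb.coprime_dvd_right ⟨2 * a.natAbs * n, by ring⟩)
  have hcop : u.Coprime (4 * a.natAbs * n) := by
    have : NeZero u := ⟨hu.pos.ne'⟩
    refine Nat.Coprime.mul_right (Nat.Coprime.mul_right ?_ ?_) ?_
    · exact (Nat.coprime_two_right.mpr hu).pow_right 2
    · by_contra hcop
      have hzero := (jacobiSym.eq_zero_iff_not_coprime (a := a) (b := u)).mpr
        fun h => hcop (Nat.coprime_comm.mp h)
      omega
    · simpa using hu1.gcd_eq
  refine hasLogMean_zero_of_antiperiodic (fun b hb => ?_) hcop fun b hb => ?_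
  · have hmod := Nat.mod_modEq b (4 * a.natAbs * n)
    have hoddmod : Odd (b % (4 * a.natAbs * n)) :=
      hodd (by rw [Nat.coprime_iff_gcd_eq_one, hmod.gcd_eq]; exact hb)
    have hiff : b % (4 * a.natAbs * n) ≡ 1 [MOD n] ↔ b ≡ 1 [MOD n] := by
      have hmodn := hmod.of_dvd (Dvd.intro_left _ rfl : n ∣ 4 * a.natAbs * n)
      exact ⟨hmodn.symm.trans, hmodn.trans⟩
    simp only [hiff, jacobiSym_congr_right hoddmod (hodd hb) (hmod.of_dvd (Dvd.intro _ rfl))]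
  · have : NeZero u := ⟨hu.pos.ne'⟩
    have : NeZero b := ⟨(hodd hb).pos.ne'⟩
    have hiff : u * b ≡ 1 [MOD n] ↔ b ≡ 1 [MOD n] := by
      have hmodn : u * b ≡ b [MOD n] := by simpa using hu1.mul_right b
      exact ⟨hmodn.symm.trans, hmodn.trans⟩
    simp only [hiff, jacobiSym.mul_right, hJ, neg_mul, one_mul, Int.cast_neg]

theorem hasLogMean_jacobiSym {a : ℤ} (ha : Squarefree a) {n : ℕ} (hn : n ≠ 0) :
    HasLogMean (fun p => (jacobiSym a p : ℝ) * if p ≡ 1 [MOD n] then 1 else 0)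
      (if (quadraticDiscr a).natAbs ∣ n then (n.totient : ℝ)⁻¹ else 0) := by
  have : NeZero n := ⟨hn⟩
  split_ifs with hdvd
  · refine (hasLogMean_modEq_one n).congr 2 fun p hp h2 => ?_
    split_ifs with hmod
    · rw [jacobiSym_eq_one_of_modEq_one (hp.odd_of_ne_two h2.ne') (hmod.of_dvd hdvd)]
      simp
    · simp
  · obtain ⟨u, hu, hu1, hJ⟩ := exists_jacobiSym_eq_neg_one ha hdvd
    exact hasLogMean_jacobiSym_zero hu hu1 hJ ha.ne_zero hn

/-! ### A Chebyshev bound uniform in the modulus -/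

lemma dvd_prod_of_coprime_of_dvd_factorial {m q N : ℕ} (hm : m ∣ N.factorial)
    (hq : q.Coprime m) : m ∣ ∏ j ∈ Finset.range N, (q * (j + 1) + 1) := by
  have : NeZero m := ⟨fun h => N.factorial_ne_zero (zero_dvd_iff.mp (h ▸ hm))⟩
  set r : ℕ := ((q : ZMod m)⁻¹).val with hr
  have hqr : (q : ZMod m) * r = 1 := by
    rw [hr, ZMod.natCast_zmod_val, ZMod.coe_mul_inv_eq_one q hq]
  have hprod : ((∏ j ∈ Finset.range N, (q * (j + 1) + 1) : ℕ) : ZMod m) =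
      (q ^ N * (r + 1).ascFactorial N : ℕ) := by
    rw [Nat.ascFactorial_eq_prod_range, ← Finset.card_range N, ← Finset.prod_const,
      Finset.card_range, ← Finset.prod_mul_distrib]
    push_cast
    refine Finset.prod_congr rfl fun j _ => ?_
    rw [← hqr]
    ring
  rw [← ZMod.natCast_eq_zero_iff, hprod, ZMod.natCast_eq_zero_iff]
  exact (hm.trans (Nat.factorial_dvd_ascFactorial _ _)).mul_left _

lemma factorial_dvd_pow_mul_prod (q N : ℕ) :
    N.factorial ∣ q ^ N * ∏ j ∈ Finset.range N, (q * (j + 1) + 1) := by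
  refine (Nat.dvd_iff_prime_pow_dvd_dvd _ _).mpr fun l i hl hdvd => ?_
  by_cases hlq : l ∣ q
  · have : Fact l.Prime := ⟨hl⟩
    have hiN : i ≤ N := ((padicValNat_dvd_iff_le N.factorial_ne_zero).mp hdvd).trans
      (padicValNat_factorial_le l N)
    exact ((pow_dvd_pow l hiN).trans (pow_dvd_pow_of_dvd hlq N)).mul_right _
  · refine (dvd_prod_of_coprime_of_dvd_factorial hdvd ?_).mul_left _
    exact ((hl.coprime_iff_not_dvd.mpr hlq).pow_left i).symm

section ChebyshevBound

variable {q N : ℕ} {s : Finset ℕ}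

lemma prod_primes_modEq_one_le (hq : 0 < q)
    (hs : ∀ p ∈ s, p.Prime ∧ p ≡ 1 [MOD q] ∧ N < p ∧ p ≤ q * N + 1) :
    ∏ p ∈ s, p ≤ (q * (q + 1)) ^ N := by
  set X := ∏ j ∈ Finset.range N, (q * (j + 1) + 1)
  have hfactor (p : ℕ) (hp : p ∈ s) : p ∣ X := by
    obtain ⟨hprime, hmod, -, hle⟩ := hs p hp
    obtain ⟨j, hj⟩ := (Nat.modEq_iff_dvd' hprime.one_le).mp hmod.symm
    have hp1 := hprime.one_lt
    have hjN : j ≤ N := Nat.le_of_mul_le_mul_left (by omega : q * j ≤ q * N) hq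
    obtain ⟨i, rfl⟩ := Nat.exists_eq_succ_of_ne_zero
      (show j ≠ 0 by rintro rfl; rw [mul_zero] at hj; omega)
    rw [show p = q * (i + 1) + 1 by rw [← Nat.succ_eq_add_one, ← hj]; omega]
    exact Finset.dvd_prod_of_mem (fun j => q * (j + 1) + 1) (Finset.mem_range.mpr hjN)
  have hprod : ∏ p ∈ s, p ∣ q ^ N * X :=
    (Finset.prod_primes_dvd X (fun p hp => (hs p hp).1.prime) hfactor).mul_left _
  have hcop : (∏ p ∈ s, p).Coprime N.factorial := by
    refine Nat.Coprime.prod_left fun p hp => ?_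
    obtain ⟨hprime, -, hlt, -⟩ := hs p hp
    rw [hprime.coprime_iff_not_dvd, hprime.dvd_factorial]
    omega
  have hX : X ≤ (q + 1) ^ N * N.factorial := by
    rw [← Finset.prod_range_add_one_eq_factorial, ← Finset.card_range N, ← Finset.prod_const,
      Finset.card_range, ← Finset.prod_mul_distrib]
    exact Finset.prod_le_prod' fun j _ => by nlinarith
  have hpos : 0 < q ^ N * X :=
    Nat.mul_pos (pow_pos hq N) (Finset.prod_pos fun _ _ => Nat.succ_pos _)
  refine Nat.le_of_mul_le_mul_right ?_ N.factorial_pos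
  calc (∏ p ∈ s, p) * N.factorial ≤ q ^ N * X :=
        Nat.le_of_dvd hpos (hcop.mul_dvd_of_dvd_of_dvd hprod (factorial_dvd_pow_mul_prod q N))
    _ ≤ q ^ N * ((q + 1) ^ N * N.factorial) := Nat.mul_le_mul_left _ hX
    _ = (q * (q + 1)) ^ N * N.factorial := by rw [mul_pow, mul_assoc]

lemma sum_log_primes_modEq_one_le (hq : 0 < q)
    (hs : ∀ p ∈ s, p.Prime ∧ p ≡ 1 [MOD q] ∧ N < p ∧ p ≤ q * N + 1) :
    ∑ p ∈ s, Real.log p ≤ 2 * N * Real.log (q + 1) := by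
  have hpos : 0 < ∏ p ∈ s, p := Finset.prod_pos fun p hp => (hs p hp).1.pos
  have hle : ∏ p ∈ s, p ≤ (q + 1) ^ (2 * N) := by
    refine (prod_primes_modEq_one_le hq hs).trans ?_
    rw [pow_mul]
    exact Nat.pow_le_pow_left (by nlinarith) N
  calc ∑ p ∈ s, Real.log p = Real.log (∏ p ∈ s, p : ℕ) := by
        rw [Nat.cast_prod, Real.log_prod fun p hp => Nat.cast_ne_zero.mpr (hs p hp).1.ne_zero]
    _ ≤ Real.log ((q + 1) ^ (2 * N) : ℕ) :=
        Real.log_le_log (Nat.cast_pos.mpr hpos) (Nat.cast_le.mpr hle)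
    _ = 2 * N * Real.log (q + 1) := by push_cast; rw [Real.log_pow]; push_cast; rfl

end ChebyshevBound

theorem sum_log_primesBelow_modEq_one_le {q : ℕ} (hq : 0 < q) (n : ℕ) :
    ∑ p ∈ n.primesBelow with p ≡ 1 [MOD q], Real.log p ≤ 4 * (n / q) * Real.log (q + 1) := by
  set N := n / q
  set s := {p ∈ n.primesBelow | p ≡ 1 [MOD q]}
  have hsmall : ∑ p ∈ s with p ≤ N, Real.log p ≤ Real.log 4 * N := by
    refine le_trans ?_ (Chebyshev.theta_le_log4_mul_x N.cast_nonneg)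
    rw [Chebyshev.theta, Nat.floor_natCast]
    refine Finset.sum_le_sum_of_subset_of_nonneg (fun p hp => ?_) fun p _ _ =>
      Real.log_natCast_nonneg p
    simp only [s, Finset.mem_filter, Nat.mem_primesBelow] at hp
    exact Finset.mem_filter.mpr ⟨Finset.mem_Ioc.mpr ⟨hp.1.1.2.pos, hp.2⟩, hp.1.1.2⟩
  have hlarge : ∑ p ∈ s with ¬ p ≤ N, Real.log p ≤ 2 * N * Real.log (q + 1) := by
    refine sum_log_primes_modEq_one_le hq fun p hp => ?_
    simp only [s, Finset.mem_filter, Nat.mem_primesBelow, not_le] at hp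
    obtain ⟨⟨⟨hpn, hprime⟩, hmod⟩, hNp⟩ := hp
    obtain ⟨j, hj⟩ := (Nat.modEq_iff_dvd' hprime.one_le).mp hmod.symm
    have hjN : j ≤ N := (Nat.le_div_iff_mul_le hq).mpr (by rw [mul_comm]; omega)
    have := Nat.mul_le_mul_left q hjN
    exact ⟨hprime, hmod, hNp, by omega⟩
  have hlog4 : Real.log 4 ≤ 2 * Real.log (q + 1) := by
    rw [show (4 : ℝ) = 2 ^ 2 by norm_num, Real.log_pow, Nat.cast_two]
    have hq1 : (1 : ℝ) ≤ q := Nat.one_le_cast.mpr hq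
    gcongr
    linarith
  calc ∑ p ∈ s, Real.log p
      = ∑ p ∈ s with p ≤ N, Real.log p + ∑ p ∈ s with ¬ p ≤ N, Real.log p :=
        (Finset.sum_filter_add_sum_filter_not s _ _).symm
    _ ≤ Real.log 4 * N + 2 * N * Real.log (q + 1) := add_le_add hsmall hlarge
    _ ≤ 4 * N * Real.log (q + 1) := by nlinarith [N.cast_nonneg (α := ℝ)]
    _ ≤ 4 * (n / q) * Real.log (q + 1) := by
        have hlog : 0 ≤ Real.log (q + 1) := Real.log_nonneg (by simp)
        gcongr
        exact Nat.cast_div_le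

lemma log_add_one_le_two_mul_sqrt {x : ℝ} (hx : 0 ≤ x) : Real.log (x + 1) ≤ 2 * √x := by
  have hsqrt := Real.sqrt_nonneg x
  have hle : x + 1 ≤ (√x + 1) ^ 2 := by nlinarith [Real.sq_sqrt hx]
  calc Real.log (x + 1) ≤ Real.log ((√x + 1) ^ 2) := Real.log_le_log (by positivity) hle
    _ = 2 * Real.log (√x + 1) := by rw [Real.log_pow, Nat.cast_two]
    _ ≤ 2 * √x := by linarith [Real.log_le_sub_one_of_pos (by positivity : 0 < √x + 1)]

/-! ### Logarithmic means weighted by `φ(p - 1) / (p - 1)` -/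

lemma totient_div_eq_sum_moebius_div {m : ℕ} (hm : m ≠ 0) :
    (m.totient : ℝ) / m = ∑ n ∈ m.divisors, (ArithmeticFunction.moebius n : ℝ) / n := by
  have hinv := (ArithmeticFunction.sum_eq_iff_sum_mul_moebius_eq
    (f := fun n => (n.totient : ℝ)) (g := fun n => (n : ℝ))).mp
    (fun n _ => by rw [← Nat.cast_sum, Nat.sum_totient]) m (Nat.pos_of_ne_zero hm)
  rw [← hinv, Finset.sum_div, ← Nat.sum_divisorsAntidiagonal
    fun n _ => (ArithmeticFunction.moebius n : ℝ) / n]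
  refine Finset.sum_congr rfl fun x hx => ?_
  obtain ⟨rfl, -⟩ := Nat.mem_divisorsAntidiagonal.mp hx
  push_cast
  exact mul_div_mul_right _ _ (Nat.cast_ne_zero.mpr (right_ne_zero_of_mul hm))

lemma sum_moebius_div_mul_ite_modEq_one {p N : ℕ} (hp : p.Prime) (hpN : p < N) :
    ∑ n ∈ Finset.range N, (ArithmeticFunction.moebius n : ℝ) / n *
      (if p ≡ 1 [MOD n] then 1 else 0) = ((p - 1).totient : ℝ) / ((p : ℝ) - 1) := by
  have hp1 := hp.one_lt
  have hdivisors : {n ∈ Finset.range N | p ≡ 1 [MOD n]} = (p - 1).divisors := by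
    ext n
    rw [Finset.mem_filter, Finset.mem_range, Nat.mem_divisors, Nat.ModEq.comm,
      Nat.modEq_iff_dvd' hp.one_le]
    refine ⟨fun h => ⟨h.2, by omega⟩, fun h => ⟨?_, h.1⟩⟩
    have := Nat.le_of_dvd (by omega) h.1
    omega
  simp only [mul_ite, mul_one, mul_zero]
  rw [← Finset.sum_filter, hdivisors, ← Nat.cast_pred hp.pos,
    totient_div_eq_sum_moebius_div (by omega)]

lemma summable_sqrt_div_sq : Summable fun n : ℕ => √(n : ℝ) / (n : ℝ) ^ 2 := by
  refine (Real.summable_one_div_nat_rpow.mpr (by norm_num : (1 : ℝ) < 3 / 2)).congr fun n => ?_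
  rcases n.eq_zero_or_pos with rfl | hn
  · norm_num
  · have hn' : (0 : ℝ) < n := Nat.cast_pos.mpr hn
    rw [Real.sqrt_eq_rpow, ← Real.rpow_natCast, ← Real.rpow_sub hn', one_div,
      ← Real.rpow_neg hn'.le]
    norm_num

lemma sum_mul_ite_modEq_one_of_le (c : ℕ → ℝ) {n N : ℕ} (hn : N ≤ n) :
    ∑ p ∈ N.primesBelow, c p * (if p ≡ 1 [MOD n] then 1 else 0) * Real.log p = 0 := by
  refine Finset.sum_eq_zero fun p hp => ?_
  obtain ⟨hpN, hprime⟩ := Nat.mem_primesBelow.mp hp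
  rw [if_neg, mul_zero, zero_mul]
  intro hmod
  have hp1 := hprime.one_lt
  have hle := Nat.le_of_dvd (by omega) ((Nat.modEq_iff_dvd' hprime.one_le).mp hmod.symm)
  omega

section Weighted

variable {c : ℕ → ℝ}

lemma abs_sum_mul_ite_modEq_one_div_le (hc : ∀ p, |c p| ≤ 1) {n : ℕ} (hn : 0 < n) (N : ℕ) :
    |(∑ p ∈ N.primesBelow, c p * (if p ≡ 1 [MOD n] then 1 else 0) * Real.log p) / N| ≤
      8 * (√n / n) := by
  have hterm (p : ℕ) : |c p * (if p ≡ 1 [MOD n] then 1 else 0) * Real.log p| ≤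
      if p ≡ 1 [MOD n] then Real.log p else 0 := by
    split_ifs
    · rw [mul_one, abs_mul, abs_of_nonneg (Real.log_natCast_nonneg p)]
      exact mul_le_of_le_one_left (Real.log_natCast_nonneg p) (hc p)
    · simp
  rw [abs_div, Nat.abs_cast]
  refine div_le_of_le_mul₀ N.cast_nonneg (by positivity) ?_
  calc |∑ p ∈ N.primesBelow, c p * (if p ≡ 1 [MOD n] then 1 else 0) * Real.log p|
      ≤ ∑ p ∈ N.primesBelow, if p ≡ 1 [MOD n] then Real.log p else 0 :=
        (Finset.abs_sum_le_sum_abs _ _).trans (Finset.sum_le_sum fun p _ => hterm p)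
    _ ≤ 4 * (N / n) * Real.log (n + 1) := by
        rw [← Finset.sum_filter]
        exact sum_log_primesBelow_modEq_one_le hn N
    _ ≤ 4 * (N / n) * (2 * √n) := by
        gcongr
        exact log_add_one_le_two_mul_sqrt n.cast_nonneg
    _ = 8 * (√n / n) * N := by ring

theorem HasLogMean.mul_totient_div (hc : ∀ p, |c p| ≤ 1) {α : ℕ → ℝ}
    (h : ∀ n ≠ 0, HasLogMean (fun p => c p * if p ≡ 1 [MOD n] then 1 else 0) (α n)) :
    HasLogMean (fun p => c p * (((p - 1).totient : ℝ) / ((p : ℝ) - 1)))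
      (∑' n, (ArithmeticFunction.moebius n : ℝ) / n * α n) := by
  set F : ℕ → ℕ → ℝ := fun N n => (ArithmeticFunction.moebius n : ℝ) / n *
    ((∑ p ∈ N.primesBelow, c p * (if p ≡ 1 [MOD n] then 1 else 0) * Real.log p) / N) with hF
  have hlim (n : ℕ) :
      Tendsto (F · n) atTop (𝓝 ((ArithmeticFunction.moebius n : ℝ) / n * α n)) := by
    rcases eq_or_ne n 0 with rfl | hn
    · simp [hF]
    · exact Tendsto.const_mul _ (h n hn)
  have hbound (N n : ℕ) : ‖F N n‖ ≤ 8 * (√n / (n : ℝ) ^ 2) := by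
    rcases n.eq_zero_or_pos with rfl | hn
    · simp [hF]
    have hμ : |((ArithmeticFunction.moebius n : ℤ) : ℝ)| ≤ 1 := by
      exact_mod_cast ArithmeticFunction.abs_moebius_le_one
    calc ‖F N n‖ ≤ 1 / n * (8 * (√n / n)) := by
          rw [hF, Real.norm_eq_abs, abs_mul, abs_div, Nat.abs_cast]
          gcongr
          exact abs_sum_mul_ite_modEq_one_div_le hc hn N
      _ = 8 * (√n / (n : ℝ) ^ 2) := by ring
  refine (tendsto_tsum_of_dominated_convergence (summable_sqrt_div_sq.mul_left 8) hlim
    (Eventually.of_forall hbound)).congr fun N => ?_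
  rw [tsum_eq_sum (s := Finset.range N) fun n hn => by
    rw [Finset.mem_range, not_lt] at hn
    simp only [hF, sum_mul_ite_modEq_one_of_le c hn, zero_div, mul_zero]]
  simp only [hF, Finset.sum_div, Finset.mul_sum]
  rw [Finset.sum_comm]
  refine Finset.sum_congr rfl fun p hp => ?_
  obtain ⟨hpN, hprime⟩ := Nat.mem_primesBelow.mp hp
  rw [← sum_moebius_div_mul_ite_modEq_one hprime hpN, Finset.mul_sum, Finset.sum_mul,
    Finset.sum_div]
  exact Finset.sum_congr rfl fun n _ => by ring

end Weighted

/-! ### The Euler product of Artin's constant -/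

lemma hasProd_primes_ite_mem_primeFactors (d : ℕ) (f : ℕ → ℝ) :
    HasProd (fun p : Nat.Primes => if (p : ℕ) ∈ d.primeFactors then f p else 1)
      (∏ p ∈ d.primeFactors, f p) := by
  have hnat : HasProd (fun p => if p ∈ d.primeFactors then f p else 1)
      (∏ p ∈ d.primeFactors, if p ∈ d.primeFactors then f p else 1) :=
    hasProd_prod_of_ne_finset_one fun p hp => if_neg hp
  have hprimes (p : ℕ) (hp : p ∉ Set.range ((↑) : Nat.Primes → ℕ)) :
      (if p ∈ d.primeFactors then f p else 1) = 1 :=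
    if_neg fun h => hp ⟨⟨p, Nat.prime_of_mem_primeFactors h⟩, rfl⟩
  rw [Finset.prod_congr rfl fun p hp => if_pos hp] at hnat
  exact (Nat.Primes.coe_nat_injective.hasProd_iff hprimes).mpr hnat

section EulerProduct

variable {f : ℕ → ℝ} (hf1 : f 1 = 1) (hmul : ∀ {m n : ℕ}, m.Coprime n → f (m * n) = f m * f n)
  (hsq : ∀ n, ¬ Squarefree n → f n = 0)

include hf1 hmul hsq in
lemma hasProd_one_add_of_squarefree_support (hsum : Summable fun n => ‖f n‖) :
    HasProd (fun p : Nat.Primes => 1 + f p) (∑' n, f n) := by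
  have hprod := EulerProduct.eulerProduct_hasProd hf1 hmul hsum (hsq 0 not_squarefree_zero)
  have hfactor (p : Nat.Primes) : ∑' e, f (p ^ e) = 1 + f p := by
    rw [tsum_eq_sum (s := Finset.range 2) fun e he => hsq _ fun hsqf => ?_]
    · simp [Finset.sum_range_succ, hf1]
    · rw [Finset.mem_range, not_lt] at he
      exact absurd ((Nat.squarefree_pow_iff p.2.ne_one (by omega)).mp hsqf).2 (by omega)
  simpa only [hfactor] using hprod

include hf1 hmul hsq in
lemma prod_one_add_mul_tsum_coprime (hsum : Summable fun n => ‖f n‖) {d : ℕ} (hd : d ≠ 0) :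
    (∏ p ∈ d.primeFactors, (1 + f p)) * ∑' n, (if n.Coprime d then f n else 0) = ∑' n, f n := by
  have hcoprime : HasProd (fun p : Nat.Primes => 1 + if (p : ℕ).Coprime d then f p else 0)
      (∑' n, if n.Coprime d then f n else 0) := by
    refine hasProd_one_add_of_squarefree_support (f := fun n => if n.Coprime d then f n else 0)
      (by simp [hf1]) (fun {m n} hmn => ?_) (fun n hn => by simp [hsq n hn])
      (hsum.of_nonneg_of_le (fun _ => norm_nonneg _) fun n => ?_)
    · simp only [Nat.coprime_mul_iff_left, hmul hmn]
      split_ifs <;> simp_all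
    · split_ifs <;> simp
  have hfactors : HasProd (fun p : Nat.Primes => if (p : ℕ) ∈ d.primeFactors then 1 + f p else 1)
      (∏ p ∈ d.primeFactors, (1 + f p)) := hasProd_primes_ite_mem_primeFactors d _
  refine HasProd.unique ?_ (hasProd_one_add_of_squarefree_support hf1 hmul hsq hsum)
  convert hfactors.mul hcoprime using 2 with p
  by_cases hpd : (p : ℕ) ∣ d
  · simp [hpd, hd, p.2, p.2.coprime_iff_not_dvd]
  · simp [hpd, p.2.coprime_iff_not_dvd]

include hmul hsq in
lemma tsum_ite_dvd_eq_mul_tsum_coprime {d : ℕ} (hd : d ≠ 0) :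
    ∑' n, (if d ∣ n then f n else 0) = f d * ∑' n, if n.Coprime d then f n else 0 := by
  have hsupp : Function.support (fun n => if d ∣ n then f n else 0) ⊆ Set.range (d * ·) :=
    fun n hn => (ite_ne_right_iff.mp hn).1.imp fun m hm => hm.symm
  rw [← tsum_mul_left, ← (mul_right_injective₀ hd).tsum_eq hsupp]
  refine tsum_congr fun m => ?_
  rw [if_pos (Dvd.intro m rfl)]
  split_ifs with hcop
  · exact hmul hcop.symm
  · rw [mul_zero]
    exact hsq _ fun h => hcop (Nat.coprime_of_squarefree_mul h).symm

end EulerProduct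

/-- The coefficient `μ(n) / (n φ(n))` of the Dirichlet-type series whose sum is Artin's constant. -/
noncomputable def artinTerm (n : ℕ) : ℝ := ArithmeticFunction.moebius n / (n * n.totient)

lemma artinTerm_one : artinTerm 1 = 1 := by simp [artinTerm]

lemma artinTerm_mul {m n : ℕ} (h : m.Coprime n) :
    artinTerm (m * n) = artinTerm m * artinTerm n := by
  simp only [artinTerm, ArithmeticFunction.isMultiplicative_moebius.map_mul_of_coprime h,
    Nat.totient_mul h]
  push_cast
  rw [div_mul_div_comm, mul_mul_mul_comm]

lemma artinTerm_of_not_squarefree (n : ℕ) (hn : ¬ Squarefree n) : artinTerm n = 0 := by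
  rw [artinTerm, ArithmeticFunction.moebius_eq_zero_of_not_squarefree hn, Int.cast_zero, zero_div]

lemma one_add_artinTerm_prime {p : ℕ} (hp : p.Prime) :
    1 + artinTerm p = 1 - 1 / ((p : ℝ) * ((p : ℝ) - 1)) := by
  rw [artinTerm, ArithmeticFunction.moebius_apply_prime hp, Nat.totient_prime hp,
    Nat.cast_pred hp.pos]
  push_cast
  ring

lemma inv_totient_le {n : ℕ} (hn : 0 < n) : (n.totient : ℝ)⁻¹ ≤ 8 * (√n / n) := by
  have : NeZero n := ⟨hn.ne'⟩
  refine le_of_tendsto (hasLogMean_modEq_one n) (Eventually.of_forall fun N => ?_)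
  simpa only [one_mul] using (le_abs_self _).trans
    (abs_sum_mul_ite_modEq_one_div_le (c := fun _ => 1) (fun _ => abs_one.le) hn N)

lemma summable_norm_artinTerm : Summable fun n => ‖artinTerm n‖ := by
  refine (summable_sqrt_div_sq.mul_left 8).of_nonneg_of_le (fun _ => norm_nonneg _) fun n => ?_
  rcases n.eq_zero_or_pos with rfl | hn
  · simp [artinTerm]
  have hμ : |((ArithmeticFunction.moebius n : ℤ) : ℝ)| ≤ 1 := by
    exact_mod_cast ArithmeticFunction.abs_moebius_le_one
  calc ‖artinTerm n‖ ≤ 1 / (n * n.totient) := by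
        rw [artinTerm, Real.norm_eq_abs, abs_div, abs_of_nonneg (by positivity : (0 : ℝ) ≤ n * _)]
        gcongr
    _ = 1 / n * (n.totient : ℝ)⁻¹ := by ring
    _ ≤ 1 / n * (8 * (√n / n)) := by gcongr; exact inv_totient_le hn
    _ = 8 * (√n / (n : ℝ) ^ 2) := by ring

theorem tsum_artinTerm : ∑' n, artinTerm n = artinConstant := by
  rw [artinConstant, ← (hasProd_one_add_of_squarefree_support artinTerm_one artinTerm_mul
    artinTerm_of_not_squarefree summable_norm_artinTerm).tprod_eq]
  exact tprod_congr fun p => one_add_artinTerm_prime p.2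

lemma artinTerm_eq_moebius_mul_prod {d : ℕ} (hd : Squarefree d) :
    artinTerm d = ArithmeticFunction.moebius d *
      (∏ q ∈ d.primeFactors, 1 / ((q : ℝ) ^ 2 - q - 1)) *
        ∏ q ∈ d.primeFactors, (1 + artinTerm q) := by
  have hprod : (d : ℝ) * d.totient = ∏ q ∈ d.primeFactors, (q : ℝ) * (q - 1) := by
    rw [Nat.totient_eq_div_primeFactors_mul, Nat.prod_primeFactors_of_squarefree hd,
      Nat.div_self (Nat.pos_of_ne_zero hd.ne_zero), one_mul, Finset.prod_mul_distrib,
      ← Nat.cast_prod, Nat.prod_primeFactors_of_squarefree hd, Nat.cast_prod]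
    congr 1
    exact Finset.prod_congr rfl fun q hq => Nat.cast_pred (Nat.pos_of_mem_primeFactors hq)
  rw [artinTerm, hprod, mul_assoc, ← Finset.prod_mul_distrib, div_eq_mul_inv,
    ← Finset.prod_inv_distrib]
  congr 1
  refine Finset.prod_congr rfl fun q hq => ?_
  have hprime := Nat.prime_of_mem_primeFactors hq
  have hq2 : (2 : ℝ) ≤ q := Nat.ofNat_le_cast.mpr hprime.two_le
  have hne : (q : ℝ) ^ 2 - q - 1 ≠ 0 := by nlinarith
  have hne' : (q : ℝ) - 1 ≠ 0 := by linarith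
  have hone_sub : 1 - 1 / ((q : ℝ) * (q - 1)) = (q ^ 2 - q - 1) / (q * (q - 1)) := by
    field_simp
  rw [one_add_artinTerm_prime hprime, hone_sub, one_div_mul_eq_div, div_div_cancel_left' hne]

theorem tsum_artinTerm_dvd (d : ℕ) :
    ∑' n, (if d ∣ n then artinTerm n else 0) = artinConstant *
      (ArithmeticFunction.moebius d * ∏ q ∈ d.primeFactors, 1 / ((q : ℝ) ^ 2 - q - 1)) := by
  by_cases hd : Squarefree d
  · rw [tsum_ite_dvd_eq_mul_tsum_coprime artinTerm_mul artinTerm_of_not_squarefree hd.ne_zero,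
      artinTerm_eq_moebius_mul_prod hd, mul_assoc, prod_one_add_mul_tsum_coprime artinTerm_one
        artinTerm_mul artinTerm_of_not_squarefree summable_norm_artinTerm hd.ne_zero,
      tsum_artinTerm, mul_comm]
  · rw [ArithmeticFunction.moebius_eq_zero_of_not_squarefree hd, Int.cast_zero, zero_mul, mul_zero]
    refine (tsum_congr fun n => ?_).trans tsum_zero
    split_ifs with hdn
    · exact artinTerm_of_not_squarefree n fun h => hd (h.squarefree_of_dvd hdn)
    · rfl

/-! ### Weighted means along monotone weights -/

lemma abs_sum_mul_le_of_monotone {e v : ℕ → ℝ} (hv : Monotone v) (hv0 : 0 ≤ v 0) {n : ℕ} {B : ℝ}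
    (hB : ∀ m ≤ n, |∑ j ∈ Finset.range m, e j| ≤ B) :
    |∑ j ∈ Finset.range n, e j * v j| ≤ 2 * B * v n := by
  have hB0 : 0 ≤ B := (abs_nonneg _).trans (hB 0 n.zero_le)
  rcases n with _ | n
  · simpa using mul_nonneg (mul_nonneg zero_le_two hB0) hv0
  have hincr (j : ℕ) : 0 ≤ v (j + 1) - v j := sub_nonneg.mpr (hv j.le_succ)
  have hlast : |v n * ∑ j ∈ Finset.range (n + 1), e j| ≤ v n * B := by
    rw [abs_mul, abs_of_nonneg (hv0.trans (hv n.zero_le))]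
    exact mul_le_mul_of_nonneg_left (hB _ le_rfl) (hv0.trans (hv n.zero_le))
  have hparts : |∑ i ∈ Finset.range n, (v (i + 1) - v i) * ∑ j ∈ Finset.range (i + 1), e j|
      ≤ (v n - v 0) * B := by
    rw [← Finset.sum_range_sub, Finset.sum_mul]
    refine (Finset.abs_sum_le_sum_abs _ _).trans (Finset.sum_le_sum fun i hi => ?_)
    rw [abs_mul, abs_of_nonneg (hincr i)]
    exact mul_le_mul_of_nonneg_left (hB _ (by grind)) (hincr i)
  have hsum := Finset.sum_range_by_parts v e (n + 1)
  simp only [smul_eq_mul, add_tsub_cancel_right] at hsum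
  simp only [mul_comm (e _), hsum]
  calc _ ≤ v n * B + (v n - v 0) * B := (abs_sub _ _).trans (add_le_add hlast hparts)
    _ ≤ 2 * B * v n := by nlinarith
    _ ≤ 2 * B * v (n + 1) := by gcongr; exact hv n.le_succ

lemma eventually_forall_abs_le_mul_of_tendsto_div {E : ℕ → ℝ}
    (hE : Tendsto (fun n : ℕ => E n / n) atTop (𝓝 0)) {ε : ℝ} (hε : 0 < ε) :
    ∀ᶠ n : ℕ in atTop, ∀ m ≤ n, |E m| ≤ ε * n := by
  have habs : ∀ᶠ m : ℕ in atTop, |E m| ≤ ε * m := by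
    have hlt : ∀ᶠ m : ℕ in atTop, |E m / m| < ε :=
      (abs_zero (α := ℝ) ▸ hE.abs).eventually_lt_const hε
    filter_upwards [hlt, eventually_gt_atTop 0] with m hm hm0
    rw [abs_div, Nat.abs_cast, div_lt_iff₀ (by positivity)] at hm
    exact hm.le
  obtain ⟨N, hN⟩ := eventually_atTop.mp habs
  have hinit : ∀ᶠ n : ℕ in atTop, ∀ m ∈ Finset.range N, |E m| ≤ ε * n :=
    (Finset.eventually_all _).mpr fun m _ =>
      (tendsto_natCast_atTop_atTop.const_mul_atTop hε).eventually_ge_atTop _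
  filter_upwards [hinit] with n hn m hmn
  rcases lt_or_ge m N with hmN | hmN
  · exact hn m (Finset.mem_range.mpr hmN)
  · exact (hN m hmN).trans (by gcongr)

section WeightedMean

variable {e v : ℕ → ℝ} {C : ℝ}

lemma sum_mul_isLittleO_sum (hv : Monotone v) (hv0 : 0 ≤ v 0) (hC : 0 < C)
    (hdouble : ∀ᶠ n : ℕ in atTop, n * v n ≤ C * ∑ j ∈ Finset.range n, v j)
    (he : Tendsto (fun n : ℕ => (∑ j ∈ Finset.range n, e j) / n) atTop (𝓝 0)) :
    (fun n => ∑ j ∈ Finset.range n, e j * v j) =o[atTop] fun n => ∑ j ∈ Finset.range n, v j := by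
  refine Asymptotics.isLittleO_iff.mpr fun ε hε => ?_
  have hδ : 0 < ε / (2 * C) := by positivity
  filter_upwards [hdouble, eventually_forall_abs_le_mul_of_tendsto_div he hδ] with n hn hE
  calc ‖∑ j ∈ Finset.range n, e j * v j‖ ≤ 2 * (ε / (2 * C) * n) * v n :=
        abs_sum_mul_le_of_monotone hv hv0 hE
    _ = ε / C * (n * v n) := by ring
    _ ≤ ε / C * (C * ∑ j ∈ Finset.range n, v j) := by gcongr
    _ = ε * ∑ j ∈ Finset.range n, v j := by field_simp
    _ ≤ ε * ‖∑ j ∈ Finset.range n, v j‖ := by gcongr; exact le_abs_self _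

theorem tendsto_sum_mul_div_sum (hv : Monotone v) (hv0 : 0 ≤ v 0) (hC : 0 < C)
    (hdouble : ∀ᶠ n : ℕ in atTop, n * v n ≤ C * ∑ j ∈ Finset.range n, v j)
    (hpos : ∀ᶠ n in atTop, 0 < ∑ j ∈ Finset.range n, v j) {α : ℝ}
    (he : Tendsto (fun n : ℕ => (∑ j ∈ Finset.range n, e j) / n) atTop (𝓝 α)) :
    Tendsto (fun n => (∑ j ∈ Finset.range n, e j * v j) / ∑ j ∈ Finset.range n, v j)
      atTop (𝓝 α) := by
  have hcentred : Tendsto (fun n : ℕ => (∑ j ∈ Finset.range n, (e j - α)) / n) atTop (𝓝 0) := by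
    refine (sub_self α ▸ he.sub_const α).congr' ?_
    filter_upwards [eventually_gt_atTop 0] with n hn
    rw [Finset.sum_sub_distrib, Finset.sum_const, Finset.card_range, nsmul_eq_mul]
    field_simp
  refine (zero_add α ▸ ((sum_mul_isLittleO_sum hv hv0 hC hdouble hcentred).tendsto_div_nhds_zero
    ).add_const α).congr' ?_
  filter_upwards [hpos] with n hn
  simp only [sub_mul, Finset.sum_sub_distrib, ← Finset.mul_sum]
  field_simp
  ring

end WeightedMean

/-- The weight `j ^ k * (j - 1) / log j`: the target weight `p ^ k * (p - 1)` of a prime `p`,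
divided by the weight `log p` that `p` carries in `HasLogMean`. -/
noncomputable def logWeight (k j : ℕ) : ℝ := (j : ℝ) ^ k * (((j : ℝ) - 1) / Real.log j)

lemma sub_one_div_log_le {x y : ℝ} (hx : 1 < x) (hxy : x ≤ y) :
    (x - 1) / Real.log x ≤ (y - 1) / Real.log y := by
  have hsecant := strictConcaveOn_log_Ioi.concaveOn.neg.secant_mono (a := 1) (x := x) (y := y)
    (by simp) (by simp; linarith) (by simp; linarith) hx.ne' (hx.trans_le hxy).ne' hxy
  simp only [Pi.neg_apply, Real.log_one, neg_zero, sub_zero, neg_div, neg_le_neg_iff] at hsecant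
  have hpos : 0 < Real.log y / (y - 1) :=
    div_pos (Real.log_pos (hx.trans_le hxy)) (sub_pos.mpr (hx.trans_le hxy))
  simpa only [one_div_div] using one_div_le_one_div_of_le hpos hsecant

lemma logWeight_nonneg (k j : ℕ) : 0 ≤ logWeight k j := by
  rcases j.eq_zero_or_pos with rfl | hj
  · simp [logWeight]
  · have : (1 : ℝ) ≤ j := Nat.one_le_cast.mpr hj
    exact mul_nonneg (by positivity) (div_nonneg (sub_nonneg.mpr this) (Real.log_nonneg this))

lemma logWeight_pos (k : ℕ) {j : ℕ} (hj : 1 < j) : 0 < logWeight k j := by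
  have : (1 : ℝ) < j := Nat.one_lt_cast.mpr hj
  exact mul_pos (by positivity) (div_pos (sub_pos.mpr this) (Real.log_pos this))

lemma logWeight_mono (k : ℕ) : Monotone (logWeight k) := by
  intro i j hij
  rcases lt_or_ge 1 i with hi | hi
  · have hi' : (1 : ℝ) < i := Nat.one_lt_cast.mpr hi
    have hij' : (i : ℝ) ≤ j := Nat.cast_le.mpr hij
    exact mul_le_mul (pow_le_pow_left₀ (by positivity) hij' k) (sub_one_div_log_le hi' hij')
      (div_nonneg (by linarith) (Real.log_nonneg hi'.le)) (by positivity)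
  · have hzero : logWeight k i = 0 := by interval_cases i <;> simp [logWeight]
    exact hzero ▸ logWeight_nonneg k j

lemma logWeight_le_mul_half (k : ℕ) {n : ℕ} (hn : 4 ≤ n) :
    logWeight k n ≤ 4 * 3 ^ k * logWeight k (n / 2) := by
  have hn2 : 2 ≤ n / 2 := by omega
  have hle : (n : ℝ) ≤ 2 * (n / 2 : ℕ) + 1 := by exact_mod_cast (by omega : n ≤ 2 * (n / 2) + 1)
  have hge : ((n / 2 : ℕ) : ℝ) ≤ n := Nat.cast_le.mpr (n.div_le_self 2)
  generalize n / 2 = m at *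
  have hm : (2 : ℝ) ≤ m := by exact_mod_cast hn2
  have hlog : 0 < Real.log m := Real.log_pos (by linarith)
  have : 0 ≤ (n : ℝ) - 1 := by linarith
  have : 0 ≤ Real.log n := Real.log_natCast_nonneg n
  calc logWeight k n ≤ (3 * (m : ℝ)) ^ k * (4 * (m - 1) / Real.log m) := by
        unfold logWeight
        gcongr <;> linarith
    _ = 4 * 3 ^ k * logWeight k m := by rw [logWeight]; ring

lemma mul_logWeight_le_sum (k : ℕ) {n : ℕ} (hn : 4 ≤ n) :
    n * logWeight k n ≤ 8 * 3 ^ k * ∑ j ∈ Finset.range n, logWeight k j := by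
  have hhalf : (n : ℝ) ≤ 2 * (n - n / 2 : ℕ) := by exact_mod_cast (by omega : n ≤ 2 * (n - n / 2))
  have hupper : (n - n / 2 : ℕ) * logWeight k (n / 2) ≤ ∑ j ∈ Finset.range n, logWeight k j :=
    calc (n - n / 2 : ℕ) * logWeight k (n / 2)
        = ∑ _j ∈ Finset.Ico (n / 2) n, logWeight k (n / 2) := by simp
      _ ≤ ∑ j ∈ Finset.Ico (n / 2) n, logWeight k j :=
          Finset.sum_le_sum fun j hj => logWeight_mono k (Finset.mem_Ico.mp hj).1
      _ ≤ ∑ j ∈ Finset.range n, logWeight k j :=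
          Finset.sum_le_sum_of_subset_of_nonneg (by grind) fun j _ _ => logWeight_nonneg k j
  calc n * logWeight k n
      ≤ (2 * (n - n / 2 : ℕ)) * (4 * 3 ^ k * logWeight k (n / 2)) :=
        mul_le_mul hhalf (logWeight_le_mul_half k hn) (logWeight_nonneg k n) (by positivity)
    _ = 8 * 3 ^ k * ((n - n / 2 : ℕ) * logWeight k (n / 2)) := by ring
    _ ≤ 8 * 3 ^ k * ∑ j ∈ Finset.range n, logWeight k j := by gcongr

lemma sum_logWeight_pos (k : ℕ) {n : ℕ} (hn : 4 ≤ n) : 0 < ∑ j ∈ Finset.range n, logWeight k j :=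
  Finset.sum_pos' (fun j _ => logWeight_nonneg k j)
    ⟨2, Finset.mem_range.mpr (by omega), logWeight_pos k one_lt_two⟩

theorem HasLogMean.tendsto_sum_div_sum_logWeight {c : ℕ → ℝ} {α : ℝ} (h : HasLogMean c α) (k : ℕ) :
    Tendsto (fun n : ℕ => (∑ p ∈ n.primesBelow, c p * ((p : ℝ) ^ k * ((p : ℝ) - 1))) /
      ∑ j ∈ Finset.range n, logWeight k j) atTop (𝓝 α) := by
  simp only [HasLogMean, Nat.primesBelow, Finset.sum_filter] at h ⊢
  refine (tendsto_sum_mul_div_sum (logWeight_mono k) (logWeight_nonneg k 0)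
    (by positivity : (0 : ℝ) < 8 * 3 ^ k)
    (eventually_atTop.mpr ⟨4, fun n => mul_logWeight_le_sum k⟩)
    (eventually_atTop.mpr ⟨4, fun n => sum_logWeight_pos k⟩) h).congr fun n => ?_
  congr 1
  refine Finset.sum_congr rfl fun p _ => ?_
  split_ifs with hp
  · have hlog : Real.log p ≠ 0 := (Real.log_pos (Nat.one_lt_cast.mpr hp.one_lt)).ne'
    rw [logWeight]
    field_simp
  · exact zero_mul _

theorem HasLogMean.tendsto_sum_div_sum {c c' : ℕ → ℝ} {α α' : ℝ} (h : HasLogMean c α)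
    (h' : HasLogMean c' α') (hα' : α' ≠ 0) (k : ℕ) :
    Tendsto (fun n : ℕ => (∑ p ∈ n.primesBelow, c p * ((p : ℝ) ^ k * ((p : ℝ) - 1))) /
      ∑ p ∈ n.primesBelow, c' p * ((p : ℝ) ^ k * ((p : ℝ) - 1))) atTop (𝓝 (α / α')) := by
  refine ((h.tendsto_sum_div_sum_logWeight k).div
    (h'.tendsto_sum_div_sum_logWeight k) hα').congr' ?_
  filter_upwards [eventually_ge_atTop 4] with n hn
  exact div_div_div_cancel_right₀ (sum_logWeight_pos k hn).ne' _ _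

/-! ### Quadratic nonresidues -/

lemma abs_one_sub_jacobiSym_div_two_le (a : ℤ) (p : ℕ) : |(1 - (jacobiSym a p : ℝ)) / 2| ≤ 1 := by
  rcases jacobiSym.trichotomy a p with h | h | h <;> norm_num [h]

lemma quadraticDiscr_natAbs_ne_one {a : ℤ} (ha : a ≠ 1) : (quadraticDiscr a).natAbs ≠ 1 := by
  unfold quadraticDiscr
  split_ifs <;> omega

section Nonresidue

variable {a : ℤ} (ha : Squarefree a)
include ha

lemma hasLogMean_nonresidue_modEq_one {n : ℕ} (hn : n ≠ 0) :
    HasLogMean (fun p => (1 - (jacobiSym a p : ℝ)) / 2 * if p ≡ 1 [MOD n] then 1 else 0)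
      (2⁻¹ * ((n.totient : ℝ)⁻¹ -
        if (quadraticDiscr a).natAbs ∣ n then (n.totient : ℝ)⁻¹ else 0)) := by
  have : NeZero n := ⟨hn⟩
  refine (((hasLogMean_modEq_one n).sub (hasLogMean_jacobiSym ha hn)).const_mul 2⁻¹).congr 0
    fun p _ _ => ?_
  ring

theorem hasLogMean_nonresidue (ha1 : a ≠ 1) :
    HasLogMean (fun p => (1 - (jacobiSym a p : ℝ)) / 2) 2⁻¹ := by
  have h := hasLogMean_nonresidue_modEq_one ha one_ne_zero
  simpa [Nat.modEq_one, quadraticDiscr_natAbs_ne_one ha1] using h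

theorem hasLogMean_nonresidue_mul_totient_div :
    HasLogMean (fun p => (1 - (jacobiSym a p : ℝ)) / 2 * (((p - 1).totient : ℝ) / ((p : ℝ) - 1)))
      (2⁻¹ * (artinConstant * (1 - (ArithmeticFunction.moebius (quadraticDiscr a).natAbs : ℝ) *
        ∏ q ∈ (quadraticDiscr a).natAbs.primeFactors, 1 / ((q : ℝ) ^ 2 - q - 1)))) := by
  set D := (quadraticDiscr a).natAbs
  have hterm (n : ℕ) : (ArithmeticFunction.moebius n : ℝ) / n *
      (2⁻¹ * ((n.totient : ℝ)⁻¹ - if D ∣ n then (n.totient : ℝ)⁻¹ else 0)) =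
      2⁻¹ * (artinTerm n - if D ∣ n then artinTerm n else 0) := by
    rw [artinTerm, ← div_div, div_eq_mul_inv _ (n.totient : ℝ)]
    split_ifs <;> ring
  have hsum : Summable artinTerm := summable_norm_artinTerm.of_norm
  have hsum_dvd : Summable fun n => if D ∣ n then artinTerm n else 0 :=
    (hsum.indicator {n | D ∣ n}).congr fun n => by simp [Set.indicator]
  have h := HasLogMean.mul_totient_div (abs_one_sub_jacobiSym_div_two_le a)
    fun n => hasLogMean_nonresidue_modEq_one ha (n := n)
  rwa [tsum_congr hterm, tsum_mul_left, hsum.tsum_sub hsum_dvd, tsum_artinTerm, tsum_artinTerm_dvd,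
    ← mul_one_sub] at h

end Nonresidue

lemma ite_jacobiSym_eq_neg_one {g a m : ℤ} (hg : g = a * m ^ 2) (hg0 : g ≠ 0) {p : ℕ}
    (hp : p.Prime) (hgp : g.natAbs < p) :
    (if jacobiSym g p = -1 then (1 : ℝ) else 0) = (1 - (jacobiSym a p : ℝ)) / 2 := by
  have hgcd {x : ℤ} (hx : x ∣ g) : x.gcd p = 1 := by
    have hpx : ¬ p ∣ x.natAbs := fun h => hgp.not_ge <|
      Nat.le_of_dvd (Int.natAbs_pos.mpr hg0) (h.trans (Int.natAbs_dvd_natAbs.mpr hx))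
    exact ((hp.coprime_iff_not_dvd).mpr hpx).symm
  have hm : m ∣ g := hg ▸ (Dvd.intro_left m (sq m).symm).mul_left a
  have hsymm : jacobiSym g p = jacobiSym a p := by
    rw [hg, jacobiSym.mul_left, jacobiSym.sq_one' (hgcd hm), mul_one]
  rcases jacobiSym.eq_one_or_neg_one (hgcd ⟨m ^ 2, hg⟩) with h | h <;> norm_num [hsymm, h]

lemma sum_range_nth_prime {M : Type*} [AddCommMonoid M] (f : ℕ → M) (N : ℕ) :
    ∑ i ∈ Finset.range N, f (Nat.nth Nat.Prime i) =
      ∑ p ∈ (Nat.nth Nat.Prime N).primesBelow, f p := by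
  induction N with
  | zero =>
    have hempty : Nat.primesBelow 2 = ∅ := by decide
    rw [Nat.nth_prime_zero_eq_two, hempty, Finset.range_zero, Finset.sum_empty, Finset.sum_empty]
  | succ N ih =>
    rw [Finset.sum_range_succ, ih, Nat.primesBelow, Nat.primesBelow,
      Nat.filter_range_nth_eq_insert_of_infinite Nat.infinite_setOfPred_prime,
      Finset.sum_insert (by simp), add_comm]

lemma sum_filter_legendreSym (g : ℤ) (f : ℕ → ℝ) (N : ℕ) :
    ∑ i ∈ (Finset.range N).filter (fun i =>
        @legendreSym (Nat.nth Nat.Prime i) ⟨Nat.prime_nth_prime i⟩ g = -1),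
      f (Nat.nth Nat.Prime i) =
      ∑ p ∈ (Nat.nth Nat.Prime N).primesBelow, (if jacobiSym g p = -1 then 1 else 0) * f p := by
  simp only [Finset.sum_filter, jacobiSym.legendreSym.to_jacobiSym, ite_mul, one_mul, zero_mul]
  exact sum_range_nth_prime (fun p => if jacobiSym g p = -1 then f p else 0) N

theorem artin_ratio_formula_g_general (g : ℤ) (hsq : ¬ IsSquare g)
    (g₁ : ℤ) (hg₁ : Squarefree g₁) (hker : ∃ m : ℤ, g = g₁ * m ^ 2)
    (d : ℤ) (hd : d = if g₁ % 4 = 1 then g₁ else 4 * g₁)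
    (k : ℕ) :
    Tendsto (fun N : ℕ =>
        (∑ i ∈ (Finset.range N).filter (fun i =>
            @legendreSym (Nat.nth Nat.Prime i) ⟨Nat.prime_nth_prime i⟩ g = -1),
          (Nat.nth Nat.Prime i : ℝ) ^ k * ((Nat.nth Nat.Prime i - 1).totient : ℝ)) /
        (∑ i ∈ (Finset.range N).filter (fun i =>
            @legendreSym (Nat.nth Nat.Prime i) ⟨Nat.prime_nth_prime i⟩ g = -1),
          (Nat.nth Nat.Prime i : ℝ) ^ k * ((Nat.nth Nat.Prime i : ℝ) - 1)))
      atTop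
      (nhds (artinConstant *
        (1 - (ArithmeticFunction.moebius d.natAbs : ℝ) *
          ∏ q ∈ d.natAbs.primeFactors, (1 / ((q : ℝ) ^ 2 - q - 1))))) := by
  obtain ⟨m, hm⟩ := hker
  obtain rfl : d = quadraticDiscr g₁ := hd
  have hg0 : g ≠ 0 := fun h => hsq (h ▸ IsSquare.zero)
  have hg₁1 : g₁ ≠ 1 := fun h => hsq ⟨m, by rw [hm, h, one_mul, sq]⟩
  have hden : HasLogMean (fun p => if jacobiSym g p = -1 then 1 else 0) 2⁻¹ :=
    (hasLogMean_nonresidue hg₁ hg₁1).congr g.natAbs fun p hp hgp =>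
      (ite_jacobiSym_eq_neg_one hm hg0 hp hgp).symm
  have hnum := (hasLogMean_nonresidue_mul_totient_div hg₁).congr g.natAbs fun p hp hgp =>
    congrArg (· * (((p - 1).totient : ℝ) / ((p : ℝ) - 1)))
      (ite_jacobiSym_eq_neg_one hm hg0 hp hgp).symm
  have hratio := (hnum.tendsto_sum_div_sum hden (by norm_num) k).comp
    (Nat.nth_strictMono Nat.infinite_setOfPred_prime).tendsto_atTop
  rw [mul_div_cancel_left₀ _ (by norm_num)] at hratio
  refine hratio.congr fun N => ?_
  simp only [Function.comp_apply,
    sum_filter_legendreSym g fun p => (p : ℝ) ^ k * ((p - 1).totient : ℝ),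
    sum_filter_legendreSym g fun p => (p : ℝ) ^ k * ((p : ℝ) - 1)]
  congr 1
  refine Finset.sum_congr rfl fun p hp => ?_
  have hp1 : (p : ℝ) - 1 ≠ 0 := sub_ne_zero.mpr
    (Nat.cast_ne_one.mpr (Nat.prime_of_mem_primesBelow hp).ne_one)
  field_simp

/-- For `g` not a perfect power and not a square, with `g₁` the squarefree kernel of `g`
and `d` the discriminant of `ℚ(√g)`, and any `k ≥ 0`, the ratio
`(∑' p^k φ(p-1)) / (∑' p^k (p-1))` over the primes `p` among the first `N` primes
with Legendre symbol `(g/p) = -1` tends to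
`A(g) = A · (1 - μ(|d|) ∏_{q | d} 1/(q² - q - 1))`. -/
theorem artin_ratio_formula_g (g : ℤ) (hg : 1 < |g|)
    (hpow : ∀ (g₀ : ℤ) (m : ℕ), 2 ≤ m → g ≠ g₀ ^ m)
    (hsq : ¬ IsSquare g)
    (g₁ : ℤ) (hg₁ : Squarefree g₁) (hker : ∃ m : ℤ, g = g₁ * m ^ 2)
    (d : ℤ) (hd : d = if g₁ % 4 = 1 then g₁ else 4 * g₁)
    (k : ℕ) :
    Tendsto (fun N : ℕ =>
        (∑ i ∈ (Finset.range N).filter (fun i =>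
            @legendreSym (Nat.nth Nat.Prime i) ⟨Nat.prime_nth_prime i⟩ g = -1),
          (Nat.nth Nat.Prime i : ℝ) ^ k * ((Nat.nth Nat.Prime i - 1).totient : ℝ)) /
        (∑ i ∈ (Finset.range N).filter (fun i =>
            @legendreSym (Nat.nth Nat.Prime i) ⟨Nat.prime_nth_prime i⟩ g = -1),
          (Nat.nth Nat.Prime i : ℝ) ^ k * ((Nat.nth Nat.Prime i : ℝ) - 1)))
      atTop
      (nhds (artinConstant *
        (1 - (ArithmeticFunction.moebius d.natAbs : ℝ) *
          ∏ q ∈ d.natAbs.primeFactors, (1 / ((q : ℝ) ^ 2 - q - 1))))) :=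
  artin_ratio_formula_g_general g hsq g₁ hg₁ hker d hd k
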